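/- arXiv:math/0310231 — 2 statements merged into one kernel-verified Lean document; each statement's English description precedes it below -/
import Mathlib

section
/- Every pair (Q, L), where Q is a nondegenerate quadratic form on ℝ^d and L a nonzero linear form, is equivalent (under simultaneous linear change of coordinates by g ∈ GL(d,ℝ) and independent scaling of Q and L by nonzero reals) to a pair of exactly one of the two types: (I) (x₁² + … + x_s² − x_{s+1}² − … − x_d², x_d) with 1 ≤ s ≤ d, or (II) (x₁² + … + x_s² − x_{s+1}² − … − x_{d−2}² + x_{d−1}x_d, x_d) with 0 ≤ s ≤ ⌊(d−2)/2⌋. -/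
/-- Two pairs of (quadratic form, linear form) on `ℝ^d` are equivalent if they agree up to
a linear change of coordinates `g ∈ GL(d,ℝ)` and independent nonzero scalings. -/
def PairEquiv (d : ℕ) (Q₁ L₁ Q₂ L₂ : (Fin d → ℝ) → ℝ) : Prop :=
  ∃ (lam mu : ℝ) (g : (Fin d → ℝ) ≃ₗ[ℝ] (Fin d → ℝ)), lam ≠ 0 ∧ mu ≠ 0 ∧
    ∀ x, Q₁ x = lam * Q₂ (g x) ∧ L₁ x = mu * L₂ (g x)

/-- Index set for canonical pairs: type (I) with `1 ≤ s ≤ d`, type (II) with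
`0 ≤ s ≤ ⌊(d-2)/2⌋`. -/
def CanIdx (d : ℕ) : Type :=
  {s : ℕ // 1 ≤ s ∧ s ≤ d} ⊕ {s : ℕ // s ≤ (d - 2) / 2}

/-- Canonical quadratic form of each type. -/
def canQ (d : ℕ) (c : CanIdx d) : (Fin d → ℝ) → ℝ :=
  match c with
  | Sum.inl ⟨s, _⟩ => fun x => ∑ i : Fin d, (if (i : ℕ) < s then 1 else -1) * x i ^ 2
  | Sum.inr ⟨s, _⟩ => fun x =>
      if h : 2 ≤ d then
        (∑ i : Fin d, if (i : ℕ) < s then x i ^ 2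
          else if (i : ℕ) < d - 2 then -(x i ^ 2) else 0) +
        x ⟨d - 2, by omega⟩ * x ⟨d - 1, by omega⟩
      else 0

/-- Canonical linear form `x_d`. -/
def canL (d : ℕ) : (Fin d → ℝ) → ℝ :=
  fun x => if h : 0 < d then x ⟨d - 1, by omega⟩ else 0

/-!
Write `L = polar Q v`. If `Q v ≠ 0`, splitting off the line spanned by `v` diagonalises `Q` with
`L` a multiple of the last coordinate; if `Q v = 0`, then `v` lies in a hyperbolic plane, which
splits off likewise, and `L` is one of its two isotropic coordinates. Conversely, the inertia of `Q`
and that of `Q` on `ker L` are invariants of the pair, up to swapping positive and negative parts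
in both at once. On `ker L` the form is nondegenerate for type (I) and has a one-dimensional
radical for type (II), and the two inertias together then recover `s`.
-/

open QuadraticMap QuadraticForm

section Inertia

variable {R M M' : Type*} [Field R] [LinearOrder R] [AddCommGroup M] [AddCommGroup M']
  [Module R M] [Module R M']

/-- The inertia of a quadratic form: the maximal dimensions of a subspace on which it is positive
definite, respectively negative definite. -/
noncomputable def inertia (Q : QuadraticForm R M) : ℕ × ℕ := (sigPos Q, sigNeg Q)

theorem inertia_eq_of_equivalent {Q : QuadraticForm R M} {Q' : QuadraticForm R M'}
    (h : Q.Equivalent Q') : inertia Q = inertia Q' :=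
  Prod.ext h.sigPos_eq h.sigNeg_eq

theorem inertia_neg (Q : QuadraticForm R M) : inertia (-Q) = (inertia Q).swap := by
  simp [inertia]

variable [IsStrictOrderedRing R] [FiniteDimensional R M] (Q : QuadraticForm R M) {a : R}

theorem sigPos_smul_of_pos (ha : 0 < a) : sigPos (a • Q) = sigPos Q :=
  (sigPos_isGreatest (a • Q)).unique <| by
    simpa [PosDef, mul_pos_iff_of_pos_left ha] using sigPos_isGreatest Q

theorem inertia_smul_of_pos (ha : 0 < a) : inertia (a • Q) = inertia Q :=
  Prod.ext (sigPos_smul_of_pos Q ha) <| by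
    simpa [inertia, ← sigPos_neg] using sigPos_smul_of_pos (-Q) ha

theorem inertia_smul_of_neg (ha : a < 0) : inertia (a • Q) = (inertia Q).swap := by
  rw [show a • Q = -a • -Q by ext; simp, inertia_smul_of_pos _ (neg_pos.2 ha), inertia_neg]

end Inertia

theorem equivalent_weightedSumSquares_comp_equiv {R ι κ : Type*} [CommRing R] [Fintype ι]
    [Fintype κ] (σ : ι ≃ κ) (w : κ → R) :
    (weightedSumSquares R (w ∘ σ)).Equivalent (weightedSumSquares R w) :=
  ⟨{ LinearEquiv.funCongrLeft R R σ.symm with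
      map_app' x := by simp [weightedSumSquares_apply, ← Equiv.sum_comp σ] }⟩

theorem exists_equiv_comp_eq_of_ncard_fiber_eq {ι κ α : Type*} [Finite ι] [Finite κ] {f : ι → α}
    {g : κ → α} (h : ∀ c, {i | f i = c}.ncard = {k | g k = c}.ncard) : ∃ σ : ι ≃ κ, g ∘ σ = f := by
  have σ : ∀ c, {i // f i = c} ≃ {k // g k = c} := fun c ↦
    Classical.choice (Finite.card_eq.1 (h c))
  exact ⟨Equiv.ofFiberEquiv σ, funext (Equiv.ofFiberEquiv_map σ)⟩

theorem equivalent_of_inertia_eq {V₁ V₂ : Type*} [AddCommGroup V₁] [Module ℝ V₁]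
    [FiniteDimensional ℝ V₁] [AddCommGroup V₂] [Module ℝ V₂] [FiniteDimensional ℝ V₂]
    {Q₁ : QuadraticForm ℝ V₁} {Q₂ : QuadraticForm ℝ V₂}
    (hdim : Module.finrank ℝ V₁ = Module.finrank ℝ V₂) (hin : inertia Q₁ = inertia Q₂) :
    Q₁.Equivalent Q₂ := by
  obtain ⟨w₁, h₁⟩ := equivalent_signType_weighted_sum_squared Q₁
  obtain ⟨w₂, h₂⟩ := equivalent_signType_weighted_sum_squared Q₂
  obtain ⟨hpos, hneg⟩ := Prod.ext_iff.1 hin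
  have hrad : Module.finrank ℝ Q₁.radical = Module.finrank ℝ Q₂.radical := by
    have := sigPos_add_sigNeg_add_radical (Q := Q₁)
    have := sigPos_add_sigNeg_add_radical (Q := Q₂)
    simp only [inertia] at hpos hneg
    omega
  have hfiber : ∀ c, {i | w₁ i = c}.ncard = {i | w₂ i = c}.ncard := by
    simp only [inertia, sigPos_of_equiv_weightedSumSquares h₁,
      sigPos_of_equiv_weightedSumSquares h₂, sigNeg_of_equiv_weightedSumSquares h₁,
      sigNeg_of_equiv_weightedSumSquares h₂] at hpos hneg
    rw [finrank_radical_of_equiv_weightedSumSquares h₁,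
      finrank_radical_of_equiv_weightedSumSquares h₂] at hrad
    have hcast : ∀ w : SignType, ((w : ℝ) = 0 ↔ w = 0) ∧ ((w : ℝ) < 0 ↔ w = -1) ∧
        (0 < (w : ℝ) ↔ w = 1) := by
      rintro (_ | _ | _) <;> simp
    simp only [hcast] at hpos hneg hrad
    rintro (_ | _ | _)
    exacts [hrad, hneg, hpos]
  obtain ⟨σ, rfl⟩ := exists_equiv_comp_eq_of_ncard_fiber_eq hfiber
  exact (h₁.trans (equivalent_weightedSumSquares_comp_equiv σ fun i ↦ (w₂ i : ℝ))).trans h₂.symm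

section Splitting

variable {R M N P : Type*} [CommRing R] [AddCommGroup M] [AddCommGroup N] [AddCommGroup P]
  [Module R M] [Module R N] [Module R P]

theorem radical_eq_bot_of_prod_right {Q₁ : QuadraticMap R M P} {Q₂ : QuadraticMap R N P}
    (h : (Q₁.prod Q₂).radical = ⊥) : Q₂.radical = ⊥ := by
  refine (Submodule.eq_bot_iff _).2 fun y hy ↦ ?_
  rw [mem_radical_iff'] at hy
  have hy0 : ((0 : M), y) ∈ (Q₁.prod Q₂).radical := by
    simp [mem_radical_iff', hy.1, hy.2]
  simpa [h] using hy0

theorem polar_isometry {Q : QuadraticMap R M P} {Q' : QuadraticMap R N P} (f : Q →qᵢ Q')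
    (x y : M) : polar Q' (f x) (f y) = polar Q x y := by
  simp only [polar, ← map_add, f.map_app]

end Splitting

section Field

variable {K V P : Type*} [Field K] [Invertible (2 : K)] [AddCommGroup V] [Module K V]
  [AddCommGroup P] [Module K P] {q : QuadraticForm K P} {Q : QuadraticForm K V}

theorem eq_zero_of_forall_polar_isometry_eq_zero (hq : q.radical = ⊥) (ψ : q →qᵢ Q) {p : P}
    (hp : ∀ p', polar Q (ψ p') (ψ p) = 0) : p = 0 := by
  have hrad : p ∈ q.radical := by
    rw [radical_eq_ker_polarBilin]
    exact LinearMap.ext fun p' ↦ by simpa [polar_comm q p p', ← polar_isometry ψ] using hp p'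
  simpa [hq] using hrad

theorem exists_isometryEquiv_prod_restrict [FiniteDimensional K V] (hq : q.radical = ⊥)
    (ψ : q →qᵢ Q) :
    ∃ (W : Submodule K V) (e : (q.prod (Q.restrict W)).IsometryEquiv Q), ∀ p, e (p, 0) = ψ p := by
  have hinj : Function.Injective ψ.toLinearMap :=
    LinearMap.ker_eq_bot.1 <| LinearMap.ker_eq_bot'.2 fun p hp ↦
      eq_zero_of_forall_polar_isometry_eq_zero hq ψ fun p' ↦ by simp [show ψ p = 0 from hp]
  let S := LinearMap.range ψ.toLinearMap
  let W := LinearMap.BilinForm.orthogonal Q.polarBilin S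
  have hcompl : IsCompl S W := by
    refine (LinearMap.BilinForm.isCompl_orthogonal_iff_disjoint fun x y h ↦ ?_).2 ?_
    · simpa [polar_comm Q y x] using h
    · rw [Submodule.disjoint_def]
      rintro _ ⟨p, rfl⟩ hp
      have : p = 0 := eq_zero_of_forall_polar_isometry_eq_zero hq ψ fun p' ↦ hp (ψ p') ⟨p', rfl⟩
      simp [this]
  let e : (P × W) ≃ₗ[K] V :=
    ((LinearEquiv.ofInjective _ hinj).prodCongr (LinearEquiv.refl K W)).trans
      (Submodule.prodEquivOfIsCompl S W hcompl)
  have he : ∀ p x, e (p, x) = ψ p + x := fun p x ↦ rfl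
  refine ⟨W, ⟨e, fun ⟨p, x⟩ ↦ ?_⟩, fun p ↦ (he p 0).trans (by simp)⟩
  have hortho : polar Q (ψ p) x = 0 := x.2 (ψ p) ⟨p, rfl⟩
  change Q (e (p, x)) = _
  rw [he, QuadraticMap.map_add Q, hortho, ψ.map_app]
  simp

theorem exists_forall_eq_polar [FiniteDimensional K V] (hQ : Q.radical = ⊥) (L : V →ₗ[K] K) :
    ∃ v, ∀ x, L x = polar Q v x := by
  have hinj : Function.Injective Q.polarBilin := by
    rw [← LinearMap.ker_eq_bot, ← radical_eq_ker_polarBilin, hQ]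
  obtain ⟨v, rfl⟩ := (LinearMap.injective_iff_surjective_of_finrank_eq_finrank
    Subspace.dual_finrank_eq.symm).1 hinj L
  exact ⟨v, fun x ↦ rfl⟩

end Field

section HyperbolicPlane

/-- The hyperbolic plane: the form `(b, a) ↦ b a`. -/
def hyperbolicPlane (R : Type*) [CommRing R] : QuadraticForm R (R × R) :=
  linMulLin (LinearMap.fst R R R) (LinearMap.snd R R R)

theorem polar_hyperbolicPlane {R : Type*} [CommRing R] (p p' : R × R) :
    polar (hyperbolicPlane R) p p' = p.1 * p'.2 + p.2 * p'.1 := by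
  simp only [polar, hyperbolicPlane, linMulLin_apply, LinearMap.fst_apply, LinearMap.snd_apply,
    Prod.fst_add, Prod.snd_add]
  ring

theorem radical_hyperbolicPlane {R : Type*} [CommRing R] :
    (hyperbolicPlane R).radical = ⊥ := (Submodule.eq_bot_iff _).2 fun p hp ↦ by
  replace hp := radical_le_ker_polarBilin hp
  have h₁ : p.2 = 0 := by simpa [polar_hyperbolicPlane] using LinearMap.congr_fun hp (1, 0)
  have h₂ : p.1 = 0 := by simpa [polar_hyperbolicPlane] using LinearMap.congr_fun hp (0, 1)
  exact Prod.ext h₂ h₁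

theorem exists_isotropic_polar_eq_one {K V : Type*} [Field K] [AddCommGroup V] [Module K V]
    {Q : QuadraticForm K V} {v x : V} (hv : Q v = 0) (hx : polar Q v x ≠ 0) :
    ∃ w, Q w = 0 ∧ polar Q v w = 1 := by
  obtain ⟨y, hy⟩ : ∃ y, polar Q v y = 1 := ⟨(polar Q v x)⁻¹ • x, by simp [polar_smul_right, hx]⟩
  refine ⟨y + (-Q y) • v, ?_, ?_⟩
  · simp [QuadraticMap.map_add Q, QuadraticMap.map_smul, polar_comm Q y, hv, hy]
  · simp [polar_add_right, polar_smul_right, polar_self, hv, hy]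

end HyperbolicPlane

section Diagonal

/-- The weights of the diagonal form `diagForm`: the first `s` are `1`, those from `s` up to `t`
are `-1` and the remaining ones vanish. -/
def standardWeight (s t k : ℕ) : ℝ := if k < s then 1 else if k < t then -1 else 0

/-- The diagonal form `x₁² + … + x_s² - x_{s+1}² - … - x_t²` on `ℝ^m`. -/
noncomputable def diagForm (m s t : ℕ) : QuadraticForm ℝ (Fin m → ℝ) :=
  weightedSumSquares ℝ fun i ↦ standardWeight s t i

/-- The linear form of the canonical pairs, indexed so that it needs no positivity hypothesis. -/
abbrev lastCoord (n : ℕ) : (Fin (n + 1) → ℝ) →ₗ[ℝ] ℝ := LinearMap.proj (Fin.last n)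

/-- The quadratic form of type (II) on `ℝ^(n+2)`: the diagonal form on the first `n` coordinates
plus the product of the last two. -/
noncomputable def hyperbolicForm (n s : ℕ) : QuadraticForm ℝ (Fin (n + 2) → ℝ) :=
  diagForm (n + 2) s n +
    linMulLin (LinearMap.proj (Fin.last n).castSucc) (lastCoord (n + 1))

/-- Appending a last coordinate, as a linear equivalence. -/
def snocLinearEquiv (R : Type*) [Semiring R] (n : ℕ) :
    (R × (Fin n → R)) ≃ₗ[R] (Fin (n + 1) → R) where
  toEquiv := Fin.snocEquiv fun _ ↦ R
  map_add' x y := by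
    ext i; cases i using Fin.lastCases <;> simp [Fin.snocEquiv]
  map_smul' a x := by
    ext i; cases i using Fin.lastCases <;> simp [Fin.snocEquiv]

@[simp]
theorem snocLinearEquiv_last {R : Type*} [Semiring R] {n : ℕ} (x : R × (Fin n → R)) :
    snocLinearEquiv R n x (Fin.last n) = x.1 := by
  simp [snocLinearEquiv, Fin.snocEquiv]

@[simp]
theorem snocLinearEquiv_castSucc {R : Type*} [Semiring R] {n : ℕ} (x : R × (Fin n → R))
    (i : Fin n) : snocLinearEquiv R n x i.castSucc = x.2 i := by
  simp [snocLinearEquiv, Fin.snocEquiv]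

theorem diagForm_apply (m s t : ℕ) (x : Fin m → ℝ) :
    diagForm m s t x = ∑ i : Fin m, standardWeight s t i * (x i * x i) := by
  simp [diagForm, weightedSumSquares_apply]

theorem diagForm_eq_of_le {m t : ℕ} (s : ℕ) (hmt : m ≤ t) : diagForm m s t = diagForm m s m := by
  ext x
  simp [diagForm_apply, standardWeight, Fin.is_lt, (Fin.is_lt _).trans_le hmt]

theorem diagForm_snocLinearEquiv (n s t : ℕ) (a : ℝ) (y : Fin n → ℝ) :
    diagForm (n + 1) s t (snocLinearEquiv ℝ n (a, y)) =
      diagForm n s t y + standardWeight s t n * (a * a) := by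
  simp [diagForm_apply, Fin.sum_univ_castSucc]

theorem hyperbolicForm_snocLinearEquiv {n s : ℕ} (hs : s ≤ n) (a b : ℝ) (y : Fin n → ℝ) :
    hyperbolicForm n s (snocLinearEquiv ℝ (n + 1) (b, snocLinearEquiv ℝ n (a, y))) =
      diagForm n s n y + a * b := by
  have h : ∀ k, n ≤ k → standardWeight s n k = 0 := fun k hk ↦ by
    simp [standardWeight, hk.not_gt, (hs.trans hk).not_gt]
  simp [hyperbolicForm, diagForm_snocLinearEquiv, h]

theorem ncard_setOf_fin_mem_Ico (m s t : ℕ) :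
    {i : Fin m | s ≤ i ∧ (i : ℕ) < t}.ncard = min t m - s := by
  rw [← Set.ncard_image_of_injective _ Fin.val_injective, ← Nat.card_Ico, ← Set.ncard_coe_finset]
  congr 1
  ext k
  simp only [Set.mem_image, Set.mem_ofPred_eq, Finset.coe_Ico, Set.mem_Ico, lt_min_iff]
  exact ⟨by rintro ⟨i, hi, rfl⟩; exact ⟨hi.1, hi.2, i.2⟩, fun h ↦ ⟨⟨k, h.2.2⟩, ⟨h.1, h.2.1⟩, rfl⟩⟩

theorem inertia_diagForm (m s t : ℕ) : inertia (diagForm m s t) = (min s m, min t m - s) := by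
  have hpos : ∀ k, 0 < standardWeight s t k ↔ 0 ≤ k ∧ k < s := fun k ↦ by
    unfold standardWeight; split_ifs <;> simp [*]
  have hneg : ∀ k, standardWeight s t k < 0 ↔ s ≤ k ∧ k < t := fun k ↦ by
    unfold standardWeight; split_ifs <;> norm_num <;> omega
  simp only [inertia, diagForm, sigPos_weightedSumSquares, sigNeg_weightedSumSquares, hpos, hneg,
    ncard_setOf_fin_mem_Ico, Nat.sub_zero]

theorem inertia_restrict_ker_lastCoord {n : ℕ} {Q : QuadraticForm ℝ (Fin (n + 1) → ℝ)}
    {Q' : QuadraticForm ℝ (Fin n → ℝ)} (h : ∀ y, Q (snocLinearEquiv ℝ n (0, y)) = Q' y) :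
    inertia (Q.restrict (LinearMap.ker (lastCoord n))) = inertia Q' := by
  let f : (Fin n → ℝ) →ₗ[ℝ] (Fin (n + 1) → ℝ) := snocLinearEquiv ℝ n ∘ₗ LinearMap.inr ℝ ℝ _
  have hf : Function.Injective f := (snocLinearEquiv ℝ n).injective.comp LinearMap.inr_injective
  have hrange : LinearMap.range f = LinearMap.ker (lastCoord n) := by
    ext x
    obtain ⟨⟨a, y⟩, rfl⟩ := (snocLinearEquiv ℝ n).surjective x
    simp [f, eq_comm]
  refine (inertia_eq_of_equivalent ⟨⟨(LinearEquiv.ofInjective f hf).trans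
    (LinearEquiv.ofEq _ _ hrange), h⟩⟩).symm

theorem exists_equivalent_diagForm {V : Type*} [AddCommGroup V] [Module ℝ V]
    [FiniteDimensional ℝ V] {n : ℕ} (hdim : Module.finrank ℝ V = n) {Q : QuadraticForm ℝ V}
    (hQ : Q.radical = ⊥) : ∃ s ≤ n, Q.Equivalent (diagForm n s n) := by
  have hsum := sigPos_add_sigNeg_add_radical (Q := Q)
  rw [hQ, finrank_bot, hdim] at hsum
  refine ⟨sigPos Q, by omega, equivalent_of_inertia_eq (by simpa using hdim) ?_⟩
  rw [inertia_diagForm, inertia]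
  ext <;> simp only <;> omega

end Diagonal

section RealSplitting

variable {P V : Type*} [AddCommGroup P] [Module ℝ P] [FiniteDimensional ℝ P] [AddCommGroup V]
  [Module ℝ V] [FiniteDimensional ℝ V]

theorem exists_isometryEquiv_prod_diagForm {q : QuadraticForm ℝ P} {Q : QuadraticForm ℝ V} {n : ℕ}
    (hdim : Module.finrank ℝ V = Module.finrank ℝ P + n) (hq : q.radical = ⊥)
    (hQ : Q.radical = ⊥) (ψ : q →qᵢ Q) :
    ∃ s ≤ n, ∃ e : (q.prod (diagForm n s n)).IsometryEquiv Q,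
      ∀ p x, polar Q (ψ p) (e x) = polar q p x.1 := by
  obtain ⟨W, e, he⟩ := exists_isometryEquiv_prod_restrict hq ψ
  have hW : Module.finrank ℝ W = n := by
    have := e.toLinearEquiv.finrank_eq
    rw [Module.finrank_prod, hdim] at this
    omega
  have hrad : (q.prod (Q.restrict W)).radical = ⊥ := by
    rw [← Submodule.finrank_eq_zero, Equivalent.rank_radical_eq ⟨e⟩, hQ, finrank_bot]
  obtain ⟨s, hs, ⟨f⟩⟩ := exists_equivalent_diagForm hW (radical_eq_bot_of_prod_right hrad)
  let e' := ((QuadraticMap.IsometryEquiv.refl q).prod f.symm).trans e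
  refine ⟨s, hs, e', fun p x ↦ ?_⟩
  have hp : e' (p, 0) = ψ p := by
    rw [← he]
    exact congrArg e (Prod.ext rfl (map_zero f.symm.toLinearEquiv))
  rw [← hp, ← e'.toIsometry_apply, ← e'.toIsometry_apply, polar_isometry]
  simp

end RealSplitting

namespace PairEquiv

variable {d : ℕ}

theorem symm {Q₁ L₁ Q₂ L₂ : (Fin d → ℝ) → ℝ} :
    PairEquiv d Q₁ L₁ Q₂ L₂ → PairEquiv d Q₂ L₂ Q₁ L₁ := by
  rintro ⟨lam, mu, g, hlam, hmu, h⟩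
  refine ⟨lam⁻¹, mu⁻¹, g.symm, inv_ne_zero hlam, inv_ne_zero hmu, fun x ↦ ?_⟩
  simp [(h (g.symm x)).1, (h (g.symm x)).2, hlam, hmu]

theorem trans {Q₁ L₁ Q₂ L₂ Q₃ L₃ : (Fin d → ℝ) → ℝ} :
    PairEquiv d Q₁ L₁ Q₂ L₂ → PairEquiv d Q₂ L₂ Q₃ L₃ → PairEquiv d Q₁ L₁ Q₃ L₃ := by
  rintro ⟨lam, mu, g, hlam, hmu, h⟩ ⟨lam', mu', g', hlam', hmu', h'⟩
  refine ⟨lam * lam', mu * mu', g.trans g', mul_ne_zero hlam hlam', mul_ne_zero hmu hmu',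
    fun x ↦ ?_⟩
  simp [(h x).1, (h x).2, (h' (g x)).1, (h' (g x)).2, mul_assoc]

theorem of_linearEquiv {P : Type*} [AddCommGroup P] [Module ℝ P] {Q L Q' L' : (Fin d → ℝ) → ℝ}
    {lam mu : ℝ} (hlam : lam ≠ 0) (hmu : mu ≠ 0) (e e' : P ≃ₗ[ℝ] (Fin d → ℝ))
    (hQ : ∀ p, Q (e p) = lam * Q' (e' p)) (hL : ∀ p, L (e p) = mu * L' (e' p)) :
    PairEquiv d Q L Q' L' :=
  ⟨lam, mu, e.symm.trans e', hlam, hmu, fun x ↦ by simp [← hQ, ← hL]⟩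

theorem neg_left (Q L : (Fin d → ℝ) → ℝ) : PairEquiv d (-Q) L Q L :=
  ⟨-1, 1, LinearEquiv.refl ℝ _, by simp, one_ne_zero, by simp⟩

theorem inertia_eq_or_eq_swap {Q₁ Q₂ : QuadraticForm ℝ (Fin d → ℝ)} {L₁ L₂ : (Fin d → ℝ) →ₗ[ℝ] ℝ}
    (h : PairEquiv d Q₁ L₁ Q₂ L₂) :
    (inertia Q₁ = inertia Q₂ ∧
        inertia (Q₁.restrict (LinearMap.ker L₁)) = inertia (Q₂.restrict (LinearMap.ker L₂))) ∨
      (inertia Q₁ = (inertia Q₂).swap ∧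
        inertia (Q₁.restrict (LinearMap.ker L₁)) =
          (inertia (Q₂.restrict (LinearMap.ker L₂))).swap) := by
  obtain ⟨lam, mu, g, hlam, hmu, h⟩ := h
  have hQ : inertia Q₁ = inertia (lam • Q₂) :=
    inertia_eq_of_equivalent ⟨⟨g, fun x ↦ by simp [h]⟩⟩
  have hmap : (LinearMap.ker L₁).map (g : (Fin d → ℝ) →ₗ[ℝ] (Fin d → ℝ)) = LinearMap.ker L₂ := by
    ext x
    simp [Submodule.mem_map_equiv, h, hmu]
  have hker : inertia (Q₁.restrict (LinearMap.ker L₁)) =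
      inertia (lam • Q₂.restrict (LinearMap.ker L₂)) :=
    inertia_eq_of_equivalent ⟨⟨g.ofSubmodules _ _ hmap, fun x ↦ by simp [h]⟩⟩
  rw [hQ, hker]
  rcases hlam.lt_or_gt with hneg | hpos
  · exact .inr ⟨inertia_smul_of_neg _ hneg, inertia_smul_of_neg _ hneg⟩
  · exact .inl ⟨inertia_smul_of_pos _ hpos, inertia_smul_of_pos _ hpos⟩

end PairEquiv

section Uniqueness

theorem inertia_diagForm_restrict_ker_lastCoord (n s t : ℕ) :
    inertia ((diagForm (n + 1) s t).restrict (LinearMap.ker (lastCoord n))) =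
      (min s n, min t n - s) := by
  rw [inertia_restrict_ker_lastCoord (Q' := diagForm n s t), inertia_diagForm]
  simp [diagForm_snocLinearEquiv]

theorem inertia_hyperbolicForm_restrict_ker_lastCoord {n s : ℕ} (hs : s ≤ n) :
    inertia ((hyperbolicForm n s).restrict (LinearMap.ker (lastCoord (n + 1)))) =
      (s, n - s) := by
  rw [inertia_restrict_ker_lastCoord (Q' := diagForm (n + 1) s n), inertia_diagForm]
  · simp [hs.trans n.le_succ]
  · simp [hyperbolicForm, diagForm_snocLinearEquiv]

variable {n s s' : ℕ}

theorem eq_of_pairEquiv_diagForm (hs : 1 ≤ s) (hsn : s ≤ n + 1) (hs' : 1 ≤ s') (hsn' : s' ≤ n + 1)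
    (h : PairEquiv (n + 1)
      (diagForm (n + 1) s (n + 1)) (lastCoord n)
      (diagForm (n + 1) s' (n + 1)) (lastCoord n)) :
    s = s' := by
  have := h.inertia_eq_or_eq_swap
  simp only [inertia_diagForm, inertia_diagForm_restrict_ker_lastCoord, Prod.swap_prod_mk,
    Prod.mk.injEq] at this
  omega

theorem not_pairEquiv_diagForm_hyperbolicForm (hs : s ≤ n + 2) (hs' : s' ≤ n) : ¬
    PairEquiv (n + 2)
      (diagForm (n + 2) s (n + 2)) (lastCoord (n + 1))
      (hyperbolicForm n s') (lastCoord (n + 1)) := by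
  intro h
  have := h.inertia_eq_or_eq_swap
  simp only [inertia_diagForm_restrict_ker_lastCoord,
    inertia_hyperbolicForm_restrict_ker_lastCoord hs', Prod.swap_prod_mk, Prod.mk.injEq] at this
  omega

theorem eq_of_pairEquiv_hyperbolicForm (hs : s ≤ n / 2) (hs' : s' ≤ n / 2)
    (h : PairEquiv (n + 2)
      (hyperbolicForm n s) (lastCoord (n + 1))
      (hyperbolicForm n s') (lastCoord (n + 1))) :
    s = s' := by
  have := h.inertia_eq_or_eq_swap
  rw [inertia_hyperbolicForm_restrict_ker_lastCoord (by omega),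
    inertia_hyperbolicForm_restrict_ker_lastCoord (by omega)] at this
  simp only [Prod.swap_prod_mk, Prod.mk.injEq] at this
  omega

end Uniqueness

section Existence

theorem pairEquiv_diagForm_zero (n : ℕ) :
    PairEquiv (n + 1) (diagForm (n + 1) 0 (n + 1)) (lastCoord n)
      (diagForm (n + 1) (n + 1) (n + 1)) (lastCoord n) := by
  have hneg : ⇑(diagForm (n + 1) 0 (n + 1)) = -⇑(diagForm (n + 1) (n + 1) (n + 1)) := by
    ext x
    simp [diagForm_apply, standardWeight, -Order.lt_add_one_iff]
  rw [hneg]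
  exact .neg_left _ _

variable {n : ℕ}

theorem exists_pairEquiv_diagForm_of_eq_neg_one {Q : QuadraticForm ℝ (Fin (n + 1) → ℝ)}
    (hQ : Q.radical = ⊥) {L : (Fin (n + 1) → ℝ) →ₗ[ℝ] ℝ} {u : Fin (n + 1) → ℝ} {r : ℝ}
    (hu : Q u = -1) (hr : r ≠ 0) (hL : ∀ x, L x = r * polar Q u x) :
    ∃ s ≤ n, PairEquiv (n + 1) Q L (diagForm (n + 1) s (n + 1)) (lastCoord n) := by
  let ψ : (-QuadraticMap.sq : QuadraticForm ℝ ℝ) →qᵢ Q :=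
    ⟨LinearMap.toSpanSingleton ℝ _ u, fun t ↦ by simp [QuadraticMap.map_smul, hu]⟩
  have hsq : (-QuadraticMap.sq : QuadraticForm ℝ ℝ).radical = ⊥ :=
    (Submodule.eq_bot_iff _).2 fun t ht ↦ by simpa using (mem_radical_iff'.1 ht).1
  obtain ⟨s, hs, e, he⟩ := exists_isometryEquiv_prod_diagForm (n := n)
    (by simp [add_comm]) hsq hQ ψ
  have hLe : ∀ x, L (e x) = r * -2 * x.1 := fun x ↦ by
    have hψ : ψ 1 = u := one_smul ℝ u
    rw [hL, ← hψ, he]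
    simp only [polar, neg_apply, QuadraticMap.sq_apply]
    ring
  refine ⟨s, hs, .of_linearEquiv one_ne_zero (mul_ne_zero hr (by norm_num : (-2 : ℝ) ≠ 0))
    e.toLinearEquiv (snocLinearEquiv ℝ n) (fun x ↦ ?_) (fun x ↦ ?_)⟩
  · obtain ⟨a, y⟩ := x
    have hw : standardWeight s (n + 1) n = -1 := by simp [standardWeight, hs.not_gt]
    rw [diagForm_snocLinearEquiv, hw, diagForm_eq_of_le s n.le_succ]
    exact (e.map_app _).trans (by simp; ring)
  · simpa using hLe x

theorem exists_pairEquiv_diagForm_of_neg {Q : QuadraticForm ℝ (Fin (n + 1) → ℝ)}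
    (hQ : Q.radical = ⊥) {L : (Fin (n + 1) → ℝ) →ₗ[ℝ] ℝ} {v : Fin (n + 1) → ℝ}
    (hv : ∀ x, L x = polar Q v x) (hneg : Q v < 0) :
    ∃ s, 1 ≤ s ∧ s ≤ n + 1 ∧
      PairEquiv (n + 1) Q L (diagForm (n + 1) s (n + 1)) (lastCoord n) := by
  set r := √(-Q v)
  have hr : r ≠ 0 := (Real.sqrt_pos.2 (neg_pos.2 hneg)).ne'
  have hrr : r * r = -Q v := Real.mul_self_sqrt (neg_pos.2 hneg).le
  have hu : Q (r⁻¹ • v) = -1 := by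
    rw [QuadraticMap.map_smul, ← neg_eq_iff_eq_neg.2 hrr, smul_eq_mul]
    field_simp
  have hL : ∀ x, L x = r * polar Q (r⁻¹ • v) x := fun x ↦ by
    rw [polar_smul_left, hv, smul_eq_mul, mul_inv_cancel_left₀ hr]
  obtain ⟨s, hs, h⟩ := exists_pairEquiv_diagForm_of_eq_neg_one hQ hu hr hL
  rcases s.eq_zero_or_pos with rfl | hs0
  · exact ⟨n + 1, by omega, le_rfl, h.trans (pairEquiv_diagForm_zero n)⟩
  · exact ⟨s, hs0, by omega, h⟩

theorem exists_pairEquiv_diagForm {Q : QuadraticForm ℝ (Fin (n + 1) → ℝ)}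
    (hQ : Q.radical = ⊥) {L : (Fin (n + 1) → ℝ) →ₗ[ℝ] ℝ} {v : Fin (n + 1) → ℝ}
    (hv : ∀ x, L x = polar Q v x) (hv0 : Q v ≠ 0) :
    ∃ s, 1 ≤ s ∧ s ≤ n + 1 ∧
      PairEquiv (n + 1) Q L (diagForm (n + 1) s (n + 1)) (lastCoord n) := by
  rcases hv0.lt_or_gt with hneg | hpos
  · exact exists_pairEquiv_diagForm_of_neg hQ hv hneg
  · have hrad : (-Q).radical = ⊥ := by
      ext; simp [← hQ, mem_radical_iff']
    obtain ⟨s, hs, hsn, h⟩ := exists_pairEquiv_diagForm_of_neg (Q := -Q) (L := L) (v := -v)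
      hrad (fun x ↦ by simp [hv, polar_neg]) (by simpa using hpos)
    exact ⟨s, hs, hsn, (PairEquiv.neg_left _ _).symm.trans h⟩

theorem exists_isometryEquiv_hyperbolicForm {s : ℕ} (hs : s ≤ n) :
    ∃ e : ((hyperbolicPlane ℝ).prod (diagForm n s n)).IsometryEquiv (hyperbolicForm n s),
      ∀ p, e p (Fin.last (n + 1)) = p.1.1 := by
  let e := LinearEquiv.prodAssoc ℝ ℝ ℝ (Fin n → ℝ) ≪≫ₗ
    (LinearEquiv.refl ℝ ℝ).prodCongr (snocLinearEquiv ℝ n) ≪≫ₗ snocLinearEquiv ℝ (n + 1)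
  refine ⟨⟨e, fun p ↦ ?_⟩, fun p ↦ snocLinearEquiv_last _⟩
  exact (hyperbolicForm_snocLinearEquiv hs p.1.2 p.1.1 p.2).trans (by simp [hyperbolicPlane]; ring)

theorem pairEquiv_hyperbolicForm_sub {s : ℕ} (hs : s ≤ n) :
    PairEquiv (n + 2) (hyperbolicForm n s) (lastCoord (n + 1))
      (hyperbolicForm n (n - s)) (lastCoord (n + 1)) := by
  obtain ⟨f⟩ : (diagForm n s n).Equivalent (-diagForm n (n - s) n) := by
    refine equivalent_of_inertia_eq (Eq.refl (Module.finrank ℝ (Fin n → ℝ))) ?_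
    rw [inertia_neg, inertia_diagForm, inertia_diagForm]
    simp only [Prod.swap_prod_mk, Prod.mk.injEq]
    omega
  obtain ⟨e, he⟩ := exists_isometryEquiv_hyperbolicForm hs
  obtain ⟨e', he'⟩ := exists_isometryEquiv_hyperbolicForm (n.sub_le s)
  let F := ((LinearEquiv.refl ℝ ℝ).prodCongr (LinearEquiv.neg ℝ (M := ℝ))).prodCongr f.toLinearEquiv
  refine .of_linearEquiv (neg_ne_zero.2 one_ne_zero) one_ne_zero e.toLinearEquiv
    (F ≪≫ₗ e'.toLinearEquiv) (fun p ↦ ?_) fun p ↦ ?_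
  · have hf : diagForm n s n p.2 = -diagForm n (n - s) n (f p.2) := (f.map_app p.2).symm
    refine (e.map_app p).trans (Eq.trans ?_ (congrArg (-1 * ·) (e'.map_app (F p)).symm))
    simp [F, hyperbolicPlane, hf, add_comm]
  · exact (he p).trans (by simp [F, he'])

theorem exists_pairEquiv_hyperbolicForm {Q : QuadraticForm ℝ (Fin (n + 2) → ℝ)}
    (hQ : Q.radical = ⊥) {L : (Fin (n + 2) → ℝ) →ₗ[ℝ] ℝ} (hL : L ≠ 0) {v : Fin (n + 2) → ℝ}
    (hv : ∀ x, L x = polar Q v x) (hv0 : Q v = 0) :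
    ∃ s ≤ n / 2, PairEquiv (n + 2) Q L (hyperbolicForm n s) (lastCoord (n + 1)) := by
  obtain ⟨x, hx⟩ := DFunLike.ne_iff.1 hL
  rw [hv] at hx
  obtain ⟨w, hw, hvw⟩ := exists_isotropic_polar_eq_one hv0 hx
  let ψ : hyperbolicPlane ℝ →qᵢ Q :=
    ⟨(LinearMap.toSpanSingleton ℝ _ w).coprod (LinearMap.toSpanSingleton ℝ _ v), fun p ↦ by
      simp [hyperbolicPlane, QuadraticMap.map_add Q, QuadraticMap.map_smul, hv0, hw,
        polar_comm Q w, hvw, polar_smul_left, polar_smul_right, mul_comm]⟩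
  have hψ : ψ (0, 1) = v := show (0 : ℝ) • w + (1 : ℝ) • v = v by simp
  obtain ⟨s, hs, e, he⟩ := exists_isometryEquiv_prod_diagForm (n := n)
    (by simp [add_comm]) radical_hyperbolicPlane hQ ψ
  obtain ⟨e', he'⟩ := exists_isometryEquiv_hyperbolicForm hs
  have hLe : ∀ p, L (e p) = p.1.1 := fun p ↦ by
    rw [hv, ← hψ, he, polar_hyperbolicPlane]
    simp
  have h : PairEquiv (n + 2) Q L (hyperbolicForm n s) (lastCoord (n + 1)) :=
    .of_linearEquiv one_ne_zero one_ne_zero e.toLinearEquiv e'.toLinearEquiv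
      (fun p ↦ (e.map_app p).trans (by simp)) fun p ↦ (hLe p).trans (by simp [he'])
  rcases le_or_gt s (n / 2) with hs2 | hs2
  · exact ⟨s, hs2, h⟩
  · exact ⟨n - s, by omega, h.trans (pairEquiv_hyperbolicForm_sub hs)⟩

end Existence

theorem canL_succ (n : ℕ) : canL (n + 1) = lastCoord n := by
  ext x
  simp [canL, Fin.last]

theorem canQ_inl {d s : ℕ} (hs : 1 ≤ s ∧ s ≤ d) : canQ d (.inl ⟨s, hs⟩) = diagForm d s d := by
  ext x
  simp [canQ, diagForm_apply, standardWeight, pow_two]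

theorem canQ_inr {n s : ℕ} (hs : s ≤ n / 2) :
    canQ (n + 2) (.inr ⟨s, hs⟩) = hyperbolicForm n s := by
  ext x
  simp [canQ, hyperbolicForm, diagForm_apply, standardWeight, pow_two, ite_mul, Fin.last]

theorem exists_pairEquiv_canQ {n : ℕ} {Q : QuadraticForm ℝ (Fin (n + 2) → ℝ)}
    (hQ : Q.radical = ⊥) {L : (Fin (n + 2) → ℝ) →ₗ[ℝ] ℝ} (hL : L ≠ 0) :
    ∃ c, PairEquiv (n + 2) Q L (canQ (n + 2) c) (canL (n + 2)) := by
  obtain ⟨v, hv⟩ := exists_forall_eq_polar hQ L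
  rw [canL_succ]
  by_cases hv0 : Q v = 0
  · obtain ⟨s, hs, h⟩ := exists_pairEquiv_hyperbolicForm hQ hL hv hv0
    exact ⟨.inr ⟨s, hs⟩, canQ_inr hs ▸ h⟩
  · obtain ⟨s, hs, hsn, h⟩ := exists_pairEquiv_diagForm hQ hv hv0
    exact ⟨.inl ⟨s, hs, hsn⟩, canQ_inl ⟨hs, hsn⟩ ▸ h⟩

theorem eq_of_pairEquiv_canQ {n : ℕ} {c c' : CanIdx (n + 2)}
    (h : PairEquiv (n + 2) (canQ (n + 2) c) (canL (n + 2)) (canQ (n + 2) c') (canL (n + 2))) :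
    c = c' := by
  rw [canL_succ] at h
  rcases c with ⟨s, hs, hsn⟩ | ⟨s, hs⟩ <;> rcases c' with ⟨s', hs', hsn'⟩ | ⟨s', hs'⟩ <;>
    simp only [canQ_inl, canQ_inr] at h
  · obtain rfl := eq_of_pairEquiv_diagForm hs hsn hs' hsn' h
    rfl
  · exact (not_pairEquiv_diagForm_hyperbolicForm hsn (by omega) h).elim
  · exact (not_pairEquiv_diagForm_hyperbolicForm hsn' (by omega) h.symm).elim
  · obtain rfl := eq_of_pairEquiv_hyperbolicForm hs hs' h
    rfl

/-- Every pair `(Q, L)` with `Q` a nondegenerate quadratic form and `L` a nonzero linear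
form on `ℝ^d` is equivalent to exactly one canonical pair of type (I) or type (II). -/
theorem stmt_5 (d : ℕ) (hd : 2 ≤ d)
    (Q : QuadraticForm ℝ (Fin d → ℝ))
    (hQnd : ∀ x : Fin d → ℝ, (∀ y, QuadraticMap.polar Q x y = 0) → x = 0)
    (L : (Fin d → ℝ) →ₗ[ℝ] ℝ) (hL : L ≠ 0) :
    ∃! c : CanIdx d, PairEquiv d (⇑Q) (⇑L) (canQ d c) (canL d) := by
  obtain ⟨n, rfl⟩ := Nat.exists_eq_add_of_le' hd
  have hQ : Q.radical = ⊥ := by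
    rw [radical_eq_ker_polarBilin, LinearMap.ker_eq_bot']
    exact fun x hx ↦ hQnd x (LinearMap.congr_fun hx)
  obtain ⟨c, hc⟩ := exists_pairEquiv_canQ hQ hL
  exact ⟨c, hc, fun c' hc' ↦ eq_of_pairEquiv_canQ (hc'.symm.trans hc)⟩
end

section
/- Let Q₀ = x₁² + x₂² − x₃² − x₄² and L₀ = x₄ on ℂ⁴, and let H ⊆ SL(4,ℂ) consist of block matrices diag(A,1) with A ∈ SO(2,1,ℂ). If F is a connected semisimple algebraic subgroup of SL(4,ℂ) acting irreducibly on ℂ⁴ with H ⊊ F ⊊ SL(4,ℂ), then F = SO(S,ℂ) for some nondegenerate quadratic form S on ℂ⁴. -/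
open Matrix

/-- The index type for `ℂ⁴ = ℂ³ ⊕ ℂ`. -/
abbrev n4 : Type := Fin 3 ⊕ Fin 1

/-- The quadratic form `x₁² + x₂² − x₃²` on `ℂ³`. -/
def q3 (v : Fin 3 → ℂ) : ℂ := v 0 ^ 2 + v 1 ^ 2 - v 2 ^ 2

/-- A subgroup of `SL(4,ℂ)` is algebraic if it is the zero locus of a set of polynomials
in the matrix entries. -/
def IsAlgebraicSubgroup (F : Subgroup (Matrix.SpecialLinearGroup n4 ℂ)) : Prop :=
  ∃ P : Set (MvPolynomial (n4 × n4) ℂ), ∀ g : Matrix.SpecialLinearGroup n4 ℂ,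
    g ∈ F ↔ ∀ p ∈ P,
      MvPolynomial.eval (fun ij => (g : Matrix n4 n4 ℂ) ij.1 ij.2) p = 0

/-- A subgroup of `SL(4,ℂ)` is connected if its set of matrices is connected. -/
def IsConnectedSubgroup (F : Subgroup (Matrix.SpecialLinearGroup n4 ℂ)) : Prop :=
  IsConnected {m : Matrix n4 n4 ℂ | ∃ g ∈ F, (g : Matrix n4 n4 ℂ) = m}

/-- A subgroup is semisimple if every connected solvable normal algebraic subgroup of it
is trivial. -/
def IsSemisimpleSubgroup (F : Subgroup (Matrix.SpecialLinearGroup n4 ℂ)) : Prop :=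
  ∀ N : Subgroup (Matrix.SpecialLinearGroup n4 ℂ), N ≤ F →
    (∀ g ∈ F, ∀ x ∈ N, g * x * g⁻¹ ∈ N) →
    IsAlgebraicSubgroup N → IsConnectedSubgroup N → IsSolvable N → N = ⊥

/-!
The generators of the one-parameter groups `exp (t • X)` contained in the closed group `F` form a
Lie algebra `𝔣`, and `H ≤ F` gives `𝔰𝔬(w) ≤ 𝔣` for the diagonal form `w` on `ℂ³` preserved by `H`.
Write `e_⋆` for the last basis vector. The Casimir operator of `𝔰𝔬(w)` separates the off-diagonal
blocks of the elements of `𝔣`, which are governed by a single subspace of `ℂ²`: the pairs `(α, β)`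
such that `𝔣` contains `α E_{k⋆} + w_k β E_{⋆k}` for every `k`. If one of the two coordinates
vanished on this subspace, `e_⋆` would be killed by all brackets in `𝔣`, acting on columns or on
rows, contradicting irreducibility. If the subspace is everything, `𝔣` contains all elementary
matrices and `F = SL`. Otherwise it is a line `α = -s β` with `s ≠ 0`, and `𝔣 = 𝔰𝔬(w ⊕ s)`.

Conjugation by `F` preserves `𝔣`, so `F` acts by similitudes of `S = w ⊕ s`; their factors are
roots of unity, hence trivial by connectedness, and `F ≤ SO(S)`. Conversely, hyperbolic rotations
`exp (t • K)` with `K ∈ 𝔰𝔬(S)` of rank two move every vector of norm `s` to `e_⋆`, and the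
stabilizer of `e_⋆` in `SO(S)` is `H ≤ F`.
-/

section ExpLieSubalgebra

open NormedSpace Filter Topology

theorem norm_pow_succ_sub_pow_succ_le {R : Type*} [NormedRing R] [NormOneClass R] {a b : R}
    {C : ℝ} (ha : ‖a‖ ≤ C) (hb : ‖b‖ ≤ C) (n : ℕ) :
    ‖a ^ (n + 1) - b ^ (n + 1)‖ ≤ (n + 1) * C ^ n * ‖a - b‖ := by
  induction n with
  | zero => simp
  | succ n ih =>
    have htelescope : a ^ (n + 2) - b ^ (n + 2) =
        a ^ (n + 1) * (a - b) + (a ^ (n + 1) - b ^ (n + 1)) * b := by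
      rw [pow_succ a, pow_succ b]
      noncomm_ring
    have hpow : ‖a ^ (n + 1)‖ ≤ C ^ (n + 1) := (norm_pow_le a _).trans (by gcongr)
    have hC : 0 ≤ C := (norm_nonneg a).trans ha
    calc ‖a ^ (n + 2) - b ^ (n + 2)‖
        ≤ ‖a ^ (n + 1) * (a - b)‖ + ‖(a ^ (n + 1) - b ^ (n + 1)) * b‖ :=
          htelescope ▸ norm_add_le _ _
      _ ≤ ‖a ^ (n + 1)‖ * ‖a - b‖ + ‖a ^ (n + 1) - b ^ (n + 1)‖ * ‖b‖ := by
          gcongr <;> exact norm_mul_le _ _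
      _ ≤ C ^ (n + 1) * ‖a - b‖ + (n + 1) * C ^ n * ‖a - b‖ * C := by gcongr
      _ = ((n + 1 : ℕ) + 1) * C ^ (n + 1) * ‖a - b‖ := by push_cast; ring

theorem tendsto_pow_succ_sub_pow_succ_of_norm_le_exp {R : Type*} [NormedRing R] [NormOneClass R]
    {a b : ℕ → R} {c : ℝ} (ha : ∀ n : ℕ, ‖a n‖ ≤ Real.exp (c / (n + 1)))
    (hb : ∀ n : ℕ, ‖b n‖ ≤ Real.exp (c / (n + 1)))
    (hab : Tendsto (fun n : ℕ ↦ (n + 1) * ‖a n - b n‖) atTop (𝓝 0)) :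
    Tendsto (fun n : ℕ ↦ a n ^ (n + 1) - b n ^ (n + 1)) atTop (𝓝 0) := by
  have hbound : ∀ n : ℕ,
      ‖a n ^ (n + 1) - b n ^ (n + 1)‖ ≤ Real.exp |c| * ((n + 1) * ‖a n - b n‖) := fun n ↦ by
    have hexp : Real.exp (c / (n + 1)) ^ n ≤ Real.exp |c| := by
      rw [← Real.exp_nat_mul]
      gcongr
      calc n * (c / (n + 1)) = (n / (n + 1)) * c := by ring
        _ ≤ (n / (n + 1)) * |c| := by gcongr; exact le_abs_self c
        _ ≤ 1 * |c| := by
          gcongr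
          exact div_le_one_of_le₀ (by linarith) (by positivity)
        _ = |c| := one_mul _
    calc ‖a n ^ (n + 1) - b n ^ (n + 1)‖
        ≤ (n + 1) * Real.exp (c / (n + 1)) ^ n * ‖a n - b n‖ :=
          norm_pow_succ_sub_pow_succ_le (ha n) (hb n) n
      _ ≤ (n + 1) * Real.exp |c| * ‖a n - b n‖ := by gcongr
      _ = Real.exp |c| * ((n + 1) * ‖a n - b n‖) := by ring
  refine squeeze_zero_norm hbound ?_
  simpa using hab.const_mul (Real.exp |c|)

variable {𝕜 A : Type*} [RCLike 𝕜] [NormedRing A] [NormedAlgebra 𝕜 A] [CompleteSpace A]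

theorem norm_exp_le_exp_norm {B : Type*} [NormedRing B] [NormedAlgebra ℝ B] [CompleteSpace B]
    [NormOneClass B] (x : B) : ‖exp x‖ ≤ Real.exp ‖x‖ := by
  rw [exp_eq_tsum ℝ, Real.exp_eq_exp_ℝ, exp_eq_tsum ℝ]
  refine tsum_of_norm_bounded (expSeries_summable' (𝕂 := ℝ) ‖x‖).hasSum fun n ↦ ?_
  rw [norm_smul, norm_inv, RCLike.norm_natCast, smul_eq_mul]
  gcongr
  exact norm_pow_le x n

theorem tendsto_natCast_succ_mul_norm_exp_mul_exp_sub_exp (x y : A) :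
    Tendsto (fun n : ℕ ↦ (n + 1) * ‖exp ((n + 1 : 𝕜)⁻¹ • x) * exp ((n + 1 : 𝕜)⁻¹ • y) -
      exp ((n + 1 : 𝕜)⁻¹ • (x + y))‖) atTop (𝓝 0) := by
  have hderiv : HasDerivAt
      (fun s : 𝕜 ↦ exp (s • x) * exp (s • y) - exp (s • (x + y))) 0 (0 : 𝕜) :=
    (((hasDerivAt_exp_smul_const x (0 : 𝕜)).mul (hasDerivAt_exp_smul_const y (0 : 𝕜))).sub
      (hasDerivAt_exp_smul_const (x + y) (0 : 𝕜))).congr_deriv (by simp)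
  have hinv : Tendsto (fun n : ℕ ↦ (n + 1 : 𝕜)⁻¹) atTop (𝓝[≠] 0) := by
    refine tendsto_nhdsWithin_iff.2 ⟨?_, Eventually.of_forall fun n ↦ ?_⟩
    · simpa using tendsto_one_div_add_atTop_nhds_zero_nat (𝕜 := 𝕜)
    · exact inv_ne_zero (Nat.cast_add_one_ne_zero n)
  have hslope := ((hasDerivAt_iff_tendsto_slope.1 hderiv).comp hinv).norm
  rw [norm_zero] at hslope
  refine hslope.congr fun n ↦ ?_
  have hnorm : ‖(n + 1 : 𝕜)‖ = n + 1 := by exact_mod_cast RCLike.norm_natCast (K := 𝕜) (n + 1)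
  simp [slope, norm_smul, hnorm]

theorem exp_inv_natCast_succ_smul_pow (x : A) (n : ℕ) :
    exp ((n + 1 : 𝕜)⁻¹ • x) ^ (n + 1) = exp x := by
  have : NormedAlgebra ℚ A := NormedAlgebra.restrictScalars ℚ 𝕜 A
  rw [← NormedSpace.exp_nsmul, ← Nat.cast_smul_eq_nsmul 𝕜, smul_smul, Nat.cast_succ,
    mul_inv_cancel₀ (Nat.cast_add_one_ne_zero n), one_smul]

theorem tendsto_exp_mul_exp_pow_succ [NormOneClass A] (x y : A) :
    Tendsto (fun n : ℕ ↦ (exp ((n + 1 : 𝕜)⁻¹ • x) * exp ((n + 1 : 𝕜)⁻¹ • y)) ^ (n + 1)) atTop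
      (𝓝 (exp (x + y))) := by
  have : NormedAlgebra ℝ A := NormedAlgebra.restrictScalars ℝ 𝕜 A
  have hnorm : ∀ (z : A) (n : ℕ), ‖(n + 1 : 𝕜)⁻¹ • z‖ = ‖z‖ / (n + 1) := fun z n ↦ by
    rw [norm_smul, norm_inv, div_eq_inv_mul]
    congr 2
    exact_mod_cast RCLike.norm_natCast (K := 𝕜) (n + 1)
  have hmul : ∀ n : ℕ, ‖exp ((n + 1 : 𝕜)⁻¹ • x) * exp ((n + 1 : 𝕜)⁻¹ • y)‖ ≤
      Real.exp ((‖x‖ + ‖y‖) / (n + 1)) := fun n ↦ by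
    rw [add_div, Real.exp_add, ← hnorm, ← hnorm]
    exact (norm_mul_le _ _).trans (mul_le_mul (norm_exp_le_exp_norm _)
      (norm_exp_le_exp_norm _) (norm_nonneg _) (Real.exp_nonneg _))
  have hadd : ∀ n : ℕ, ‖exp ((n + 1 : 𝕜)⁻¹ • (x + y))‖ ≤
      Real.exp ((‖x‖ + ‖y‖) / (n + 1)) := fun n ↦ by
    refine (norm_exp_le_exp_norm _).trans ?_
    rw [hnorm]
    gcongr
    exact norm_add_le x y
  have hlim := (tendsto_pow_succ_sub_pow_succ_of_norm_le_exp hmul hadd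
    (tendsto_natCast_succ_mul_norm_exp_mul_exp_sub_exp x y)).add_const (exp (x + y))
  simpa only [exp_inv_natCast_succ_smul_pow, sub_add_cancel, zero_add] using hlim

variable (𝕜) in
theorem exp_smul_mul_exp_smul_neg (x : A) (t : 𝕜) : exp (t • x) * exp (t • -x) = 1 := by
  have : NormedAlgebra ℚ A := NormedAlgebra.restrictScalars ℚ 𝕜 A
  rw [smul_neg, ← NormedSpace.exp_add_of_commute (Commute.neg_right rfl), add_neg_cancel, exp_zero]

theorem tendsto_slope_exp_smul_mul_mul_exp_smul_neg (x y : A) :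
    Tendsto (fun s : 𝕜 ↦ s⁻¹ • (exp (s • x) * y * exp (s • -x) - y)) (𝓝[≠] 0) (𝓝 ⁅x, y⁆) := by
  have hderiv : HasDerivAt (fun s : 𝕜 ↦ exp (s • x) * y * exp (s • -x)) ⁅x, y⁆ (0 : 𝕜) :=
    (((hasDerivAt_exp_smul_const x (0 : 𝕜)).mul_const y).mul
      (hasDerivAt_exp_smul_const (-x) (0 : 𝕜))).congr_deriv (by simp [Ring.lie_def, sub_eq_add_neg])
  exact (hasDerivAt_iff_tendsto_slope.1 hderiv).congr fun s ↦ by simp [slope]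

theorem exp_smul_conj_mem (M : Submonoid A) {u v x : A} (hu : u ∈ M) (hv : v ∈ M)
    (huv : u * v = 1) (hvu : v * u = 1) (hx : ∀ t : 𝕜, exp (t • x) ∈ M) (t : 𝕜) :
    exp (t • (u * x * v)) ∈ M := by
  have : NormedAlgebra ℚ A := NormedAlgebra.restrictScalars ℚ 𝕜 A
  have hconj : exp (t • (u * x * v)) = u * exp (t • x) * v := by
    simpa using NormedSpace.exp_units_conj (⟨u, v, huv, hvu⟩ : Aˣ) (t • x)
  exact hconj ▸ M.mul_mem (M.mul_mem hu (hx t)) hv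

variable (𝕜) in
/-- The infinitesimal generators of the one-parameter groups contained in a closed submonoid `M`
of a Banach algebra, as a subspace. -/
def expSubmodule [NormOneClass A] (M : Submonoid A) (hM : IsClosed (M : Set A)) :
    Submodule 𝕜 A where
  carrier := {x | ∀ t : 𝕜, exp (t • x) ∈ M}
  zero_mem' t := by simp
  add_mem' {x y} hx hy t := by
    rw [smul_add]
    refine hM.mem_of_tendsto (tendsto_exp_mul_exp_pow_succ (𝕜 := 𝕜) (t • x) (t • y))
      (Eventually.of_forall fun n ↦ M.pow_mem (M.mul_mem ?_ ?_) _)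
    · exact smul_smul (_ : 𝕜) t x ▸ hx _
    · exact smul_smul (_ : 𝕜) t y ▸ hy _
  smul_mem' c x hx t := smul_smul t c x ▸ hx _

theorem isClosed_expSubmodule [NormOneClass A] (M : Submonoid A) (hM : IsClosed (M : Set A)) :
    IsClosed (expSubmodule 𝕜 M hM : Set A) := by
  have : NormedAlgebra ℚ A := NormedAlgebra.restrictScalars ℚ 𝕜 A
  have hInter : (expSubmodule 𝕜 M hM : Set A) = ⋂ t : 𝕜, (fun x ↦ exp (t • x)) ⁻¹' M :=
    (Set.iInter_ofPred fun (t : 𝕜) (x : A) ↦ exp (t • x) ∈ M).symm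
  rw [hInter]
  exact isClosed_iInter fun t ↦ hM.preimage (exp_continuous.comp (continuous_const_smul t))

attribute [local instance 100] LieRing.ofAssociativeRing

variable (𝕜) in
/-- The Lie algebra of a closed submonoid `M` of a Banach algebra: the generators of the
one-parameter groups contained in `M`. -/
def expLieSubalgebra [NormOneClass A] (M : Submonoid A) (hM : IsClosed (M : Set A)) :
    LieSubalgebra 𝕜 A where
  __ := expSubmodule 𝕜 M hM
  lie_mem' {x y} hx hy := by
    refine (isClosed_expSubmodule M hM).mem_of_tendsto
      (tendsto_slope_exp_smul_mul_mul_exp_smul_neg (𝕜 := 𝕜) x y)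
      (Eventually.of_forall fun s ↦ Submodule.smul_mem _ _ (Submodule.sub_mem _ ?_ hy))
    have hneg : exp (s • -x) ∈ M := smul_neg s x ▸ neg_smul s x ▸ hx (-s)
    have hinv : exp (s • -x) * exp (s • x) = 1 := by
      simpa using exp_smul_mul_exp_smul_neg 𝕜 (-x) s
    exact exp_smul_conj_mem M (hx s) hneg (exp_smul_mul_exp_smul_neg 𝕜 x s) hinv hy

end ExpLieSubalgebra

section SpecialLinearGroup

variable {R n : Type*} [CommRing R] [Fintype n] [DecidableEq n]

theorem coe_mul_coe_inv (g : SpecialLinearGroup n R) :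
    (g : Matrix n n R) * (g⁻¹ : SpecialLinearGroup n R) = 1 :=
  congr_arg Subtype.val (mul_inv_cancel g)

theorem coe_inv_mul_coe (g : SpecialLinearGroup n R) :
    ((g⁻¹ : SpecialLinearGroup n R) : Matrix n n R) * g = 1 :=
  congr_arg Subtype.val (inv_mul_cancel g)

end SpecialLinearGroup

section SubgroupLieAlgebra

open NormedSpace LieAlgebra.SpecialLinear

attribute [local instance 100] LieRing.ofAssociativeRing
attribute [local instance] Matrix.linftyOpNormedRing Matrix.linftyOpNormedAlgebra

variable {n : Type*} [Fintype n] [DecidableEq n]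

theorem mem_map_coeMonoidHom_iff {F : Subgroup (SpecialLinearGroup n ℂ)} {m : Matrix n n ℂ} :
    m ∈ F.toSubmonoid.map SpecialLinearGroup.coeMonoidHom ↔
      ∃ g ∈ F, (g : Matrix n n ℂ) = m :=
  Submonoid.mem_map

theorem isClosed_map_coeMonoidHom {F : Subgroup (SpecialLinearGroup n ℂ)}
    (hF : IsClosed (F : Set (SpecialLinearGroup n ℂ))) :
    IsClosed (F.toSubmonoid.map SpecialLinearGroup.coeMonoidHom : Set (Matrix n n ℂ)) :=
  SpecialLinearGroup.isClosedEmbedding_val.isClosedMap _ hF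

variable [Nonempty n]

/-- The Lie algebra of a closed subgroup of `SL(n, ℂ)`. The trace condition follows from
`det (exp X) = exp (trace X)`; imposing it makes this identity unnecessary. -/
noncomputable def subgroupLieAlgebra (F : Subgroup (SpecialLinearGroup n ℂ))
    (hF : IsClosed (F : Set (SpecialLinearGroup n ℂ))) : LieSubalgebra ℂ (Matrix n n ℂ) :=
  expLieSubalgebra ℂ _ (isClosed_map_coeMonoidHom hF) ⊓ sl n ℂ

variable {F : Subgroup (SpecialLinearGroup n ℂ)}
  {hF : IsClosed (F : Set (SpecialLinearGroup n ℂ))} {X : Matrix n n ℂ}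

theorem mem_subgroupLieAlgebra_iff :
    X ∈ subgroupLieAlgebra F hF ↔
      (∀ t : ℂ, ∃ g ∈ F, (g : Matrix n n ℂ) = exp (t • X)) ∧ X.trace = 0 :=
  Iff.rfl

theorem conj_mem_subgroupLieAlgebra {g : SpecialLinearGroup n ℂ} (hg : g ∈ F)
    (hX : X ∈ subgroupLieAlgebra F hF) :
    (g : Matrix n n ℂ) * X * (g⁻¹ : SpecialLinearGroup n ℂ) ∈ subgroupLieAlgebra F hF := by
  refine mem_subgroupLieAlgebra_iff.2 ⟨exp_smul_conj_mem _
    (mem_map_coeMonoidHom_iff.2 ⟨g, hg, rfl⟩) (mem_map_coeMonoidHom_iff.2 ⟨g⁻¹, F.inv_mem hg, rfl⟩)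
    (coe_mul_coe_inv g) (coe_inv_mul_coe g) hX.1, ?_⟩
  rw [trace_mul_comm, ← mul_assoc, coe_inv_mul_coe, one_mul]
  exact (mem_subgroupLieAlgebra_iff.1 hX).2

end SubgroupLieAlgebra

section WeightedSumSquares

open QuadraticMap

theorem weightedSumSquares_eq_dotProduct_mulVec {R ι : Type*} [CommRing R] [Fintype ι]
    [DecidableEq ι] (w x : ι → R) :
    weightedSumSquares R w x = x ⬝ᵥ diagonal w *ᵥ x := by
  simp only [weightedSumSquares_apply, dotProduct, mulVec_diagonal, smul_eq_mul]
  exact Finset.sum_congr rfl fun i _ ↦ mul_left_comm _ _ _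

theorem polar_weightedSumSquares {R ι : Type*} [CommRing R] [Fintype ι] [DecidableEq ι]
    (w x y : ι → R) :
    polar (weightedSumSquares R w) x y = 2 * (x ⬝ᵥ diagonal w *ᵥ y) := by
  simp only [polar, weightedSumSquares_apply, dotProduct, mulVec_diagonal, smul_eq_mul,
    Pi.add_apply, ← Finset.sum_sub_distrib, Finset.mul_sum]
  exact Finset.sum_congr rfl fun i _ ↦ by ring

variable {𝕜 ι : Type*} [Field 𝕜] [NeZero (2 : 𝕜)] [Fintype ι] [DecidableEq ι] {w : ι → 𝕜}

omit [DecidableEq ι] in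
theorem eq_zero_of_polar_weightedSumSquares_eq_zero (hw : ∀ i, w i ≠ 0) {x : ι → 𝕜}
    (hx : ∀ y, polar (weightedSumSquares 𝕜 w) x y = 0) : x = 0 := by
  classical
  ext i
  simpa [polar_weightedSumSquares, NeZero.ne, hw] using hx (Pi.single i 1)

omit [NeZero (2 : 𝕜)] in
theorem det_diagonal_ne_zero (hw : ∀ i, w i ≠ 0) : (diagonal w).det ≠ 0 := by
  rw [det_diagonal]
  exact Finset.prod_ne_zero_iff.2 fun i _ ↦ hw i

theorem weightedSumSquares_mulVec_iff {g : Matrix ι ι 𝕜} :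
    (∀ x, weightedSumSquares 𝕜 w (g *ᵥ x) = weightedSumSquares 𝕜 w x) ↔
      gᵀ * diagonal w * g = diagonal w := by
  have dotProduct_mulVec_mulVec (x y : ι → 𝕜) :
      (g *ᵥ x) ⬝ᵥ diagonal w *ᵥ (g *ᵥ y) = x ⬝ᵥ (gᵀ * diagonal w * g) *ᵥ y := by
    rw [← mulVec_mulVec, ← mulVec_mulVec, dotProduct_mulVec x gᵀ, vecMul_transpose]
  constructor
  · intro hg
    have polar_mulVec (x y : ι → 𝕜) :
        polar (weightedSumSquares 𝕜 w) (g *ᵥ x) (g *ᵥ y) =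
          polar (weightedSumSquares 𝕜 w) x y := by
      simp only [polar, ← mulVec_add, hg]
    ext i j
    have := polar_mulVec (Pi.single i 1) (Pi.single j 1)
    rw [polar_weightedSumSquares, polar_weightedSumSquares, dotProduct_mulVec_mulVec] at this
    simpa only [single_one_dotProduct, mulVec_single_one, col_apply] using
      mul_left_cancel₀ two_ne_zero this
  · intro hg x
    rw [weightedSumSquares_eq_dotProduct_mulVec, weightedSumSquares_eq_dotProduct_mulVec,
      dotProduct_mulVec_mulVec, hg]

end WeightedSumSquares

section ExpMatrix

open NormedSpace

attribute [local instance] Matrix.linftyOpNormedRing Matrix.linftyOpNormedAlgebra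

variable {m n : Type*} [Fintype m] [DecidableEq m] [Fintype n] [DecidableEq n]

theorem exp_fromBlocks_zero_zero (A : Matrix m m ℂ) (D : Matrix n n ℂ) :
    exp (fromBlocks A 0 0 D) = fromBlocks (exp A) 0 0 (exp D) := by
  have : @CompleteSpace (Matrix m m ℂ × Matrix n n ℂ) Prod.normedRing.toUniformSpace :=
    CompleteSpace.prod
  let φ : Matrix m m ℂ × Matrix n n ℂ →+* Matrix (m ⊕ n) (m ⊕ n) ℂ :=
    { toFun := fun p ↦ fromBlocks p.1 0 0 p.2
      map_one' := fromBlocks_one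
      map_mul' := fun p q ↦ by simp [fromBlocks_multiply]
      map_zero' := fromBlocks_zero
      map_add' := fun p q ↦ by simp [fromBlocks_add] }
  have hφ : Continuous φ :=
    continuous_fst.matrix_fromBlocks continuous_const continuous_const continuous_snd
  calc exp (φ (A, D)) = φ (exp (A, D)) := (map_exp φ hφ (A, D)).symm
    _ = fromBlocks (exp A) 0 0 (exp D) :=
      congr_arg₂ (fromBlocks · 0 0 ·) (Prod.fst_exp (A, D)) (Prod.snd_exp (A, D))

theorem transpose_exp_mul_mul_exp {J K : Matrix n n ℂ} (hK : J.IsSkewAdjoint K) :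
    (exp K)ᵀ * J * exp K = J := by
  have semiconj : SemiconjBy J (exp (-K)) (exp Kᵀ) := SemiconjBy.exp_right hK.symm
  rw [← exp_transpose, ← semiconj.eq, mul_assoc,
    ← Matrix.exp_add_of_commute _ _ (Commute.refl K).neg_left, neg_add_cancel, exp_zero, mul_one]

theorem det_exp_of_isSkewAdjoint {J K : Matrix n n ℂ} (hJ : J.det ≠ 0)
    (hK : J.IsSkewAdjoint K) : (exp K).det = 1 := by
  have hK' : J.IsSkewAdjoint ((2⁻¹ : ℂ) • K) := by
    rw [← mem_skewAdjointMatricesSubmodule] at hK ⊢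
    exact Submodule.smul_mem _ _ hK
  have exp_eq_sq : exp K = exp ((2⁻¹ : ℂ) • K) * exp ((2⁻¹ : ℂ) • K) := by
    rw [← Matrix.exp_add_of_commute _ _ rfl, ← add_smul]
    norm_num
  have det_eq := congr_arg det (transpose_exp_mul_mul_exp hK')
  rw [det_mul, det_mul, det_transpose] at det_eq
  rw [exp_eq_sq, det_mul]
  exact mul_right_cancel₀ hJ (by linear_combination det_eq)

theorem trace_eq_zero_of_isSkewAdjoint {J K : Matrix n n ℂ} (hJ : J.det ≠ 0)
    (hK : J.IsSkewAdjoint K) : K.trace = 0 := by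
  have hJ' : IsUnit J.det := hJ.isUnit
  have : K.trace = -K.trace := by
    calc K.trace = Kᵀ.trace := (trace_transpose K).symm
      _ = (Kᵀ * J * J⁻¹).trace := by rw [mul_nonsing_inv_cancel_right _ _ hJ']
      _ = (J⁻¹ * (J * -K)).trace := by rw [hK, trace_mul_comm]
      _ = -K.trace := by rw [nonsing_inv_mul_cancel_left _ _ hJ', trace_neg]
  exact self_eq_neg.1 this

theorem fromBlocks_mem_subgroupLieAlgebra [Nonempty (m ⊕ n)]
    {F : Subgroup (SpecialLinearGroup (m ⊕ n) ℂ)}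
    (hF : IsClosed (F : Set (SpecialLinearGroup (m ⊕ n) ℂ))) {J : Matrix m m ℂ} (hJ : J.det ≠ 0)
    (hH : ∀ A : Matrix m m ℂ, Aᵀ * J * A = J → ∀ g : SpecialLinearGroup (m ⊕ n) ℂ,
      (g : Matrix (m ⊕ n) (m ⊕ n) ℂ) = fromBlocks A 0 0 1 → g ∈ F)
    {K : Matrix m m ℂ} (hK : J.IsSkewAdjoint K) :
    fromBlocks K 0 0 0 ∈ subgroupLieAlgebra F hF := by
  refine mem_subgroupLieAlgebra_iff.2 ⟨fun t ↦ ?_, ?_⟩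
  · have htK : J.IsSkewAdjoint (t • K) := by
      rw [← mem_skewAdjointMatricesSubmodule] at hK ⊢
      exact Submodule.smul_mem _ _ hK
    have exp_eq : exp (t • fromBlocks K 0 0 (0 : Matrix n n ℂ)) =
        fromBlocks (exp (t • K)) 0 0 1 := by
      simp only [fromBlocks_smul, smul_zero, exp_fromBlocks_zero_zero, exp_zero]
    have det_eq_one : (fromBlocks (exp (t • K)) 0 0 (1 : Matrix n n ℂ)).det = 1 := by
      rw [det_fromBlocks_zero₂₁, det_one, mul_one, det_exp_of_isSkewAdjoint hJ htK]
    exact ⟨⟨_, det_eq_one⟩, hH _ (transpose_exp_mul_mul_exp htK) _ rfl, exp_eq.symm⟩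
  · simpa [trace, Fintype.sum_sum_type] using trace_eq_zero_of_isSkewAdjoint hJ hK

end ExpMatrix

section RotationGenerator

variable {R n : Type*} [CommRing R] [DecidableEq n]

/-- The standard generator of the rotations in the `j`-`k` coordinate plane that preserve the
quadratic form with weights `w`. -/
def rotationGenerator (w : n → R) (j k : n) : Matrix n n R :=
  single j k (w k) - single k j (w j)

variable [Fintype n]

theorem isSkewAdjoint_diagonal_iff {v : n → R} {X : Matrix n n R} :
    (diagonal v).IsSkewAdjoint X ↔ ∀ i j, v i * X i j + v j * X j i = 0 := by
  rw [Matrix.IsSkewAdjoint, IsAdjointPair, ← Matrix.ext_iff]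
  refine forall₂_congr fun i j ↦ ?_
  rw [mul_diagonal, diagonal_mul, transpose_apply, Matrix.neg_apply, mul_neg,
    eq_neg_iff_add_eq_zero, add_comm, mul_comm (X j i)]

theorem isSkewAdjoint_diagonal_rotationGenerator (w : n → R) (j k : n) :
    (diagonal w).IsSkewAdjoint (rotationGenerator w j k) := by
  refine isSkewAdjoint_diagonal_iff.2 fun a b ↦ ?_
  simp only [rotationGenerator, Matrix.sub_apply, single_apply]
  grind

theorem rotationGenerator_mul_mul_rotationGenerator (w : n → R) (P : Matrix n n R) (j k : n) :
    rotationGenerator w j k * P * rotationGenerator w j k =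
      single j k (w k * P k j * w k) + single k j (w j * P j k * w j) -
        (single j j (w k * P k k * w j) + single k k (w j * P j j * w k)) := by
  simp only [rotationGenerator, sub_mul, mul_sub, single_mul_mul_single]
  abel

end RotationGenerator

section Casimir

variable {𝕜 ι : Type*} [Field 𝕜] [Fintype ι] [DecidableEq ι] {w : ι → 𝕜}

theorem sum_smul_rotationGenerator_mul_mul_rotationGenerator (hw : ∀ i, w i ≠ 0)
    (P : Matrix ι ι 𝕜) :
    ∑ j, ∑ k, (w j * w k)⁻¹ • (rotationGenerator w j k * P * rotationGenerator w j k) =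
      (2 : 𝕜) • (diagonal w⁻¹ * Pᵀ * diagonal w) - (2 * P.trace) • 1 := by
  have smul_summand (j k : ι) :
      (w j * w k)⁻¹ • (rotationGenerator w j k * P * rotationGenerator w j k) =
        single j k ((diagonal w⁻¹ * Pᵀ * diagonal w) j k) +
          single k j ((diagonal w⁻¹ * Pᵀ * diagonal w) k j) -
          (single j j (P k k) + single k k (P j j)) := by
    have hj := hw j
    have hk := hw k
    simp only [rotationGenerator_mul_mul_rotationGenerator, smul_sub, smul_add, smul_single,
      smul_eq_mul, diagonal_mul, mul_diagonal, transpose_apply, Pi.inv_apply]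
    congr 3 <;> field_simp
  have sum_single_trace : ∑ j, ∑ k, single j j (P k k) = P.trace • (1 : Matrix ι ι 𝕜) := by
    simp only [← singleAddMonoidHom_apply, ← map_sum, smul_one_eq_diagonal, trace, diag,
      ← sum_single_eq_diagonal]
  have sum_single_trace' : ∑ j, ∑ k, single k k (P j j) = P.trace • (1 : Matrix ι ι 𝕜) := by
    rw [Finset.sum_comm, sum_single_trace]
  have sum_single' : ∑ j, ∑ k, single k j ((diagonal w⁻¹ * Pᵀ * diagonal w) k j) =
      diagonal w⁻¹ * Pᵀ * diagonal w := by
    rw [Finset.sum_comm, ← matrix_eq_sum_single]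
  simp only [smul_summand, Finset.sum_sub_distrib, Finset.sum_add_distrib, sum_single',
    ← matrix_eq_sum_single, sum_single_trace, sum_single_trace', mul_smul]
  module

theorem sum_smul_rotationGenerator_sq (hw : ∀ i, w i ≠ 0) :
    ∑ j, ∑ k, (w j * w k)⁻¹ • (rotationGenerator w j k * rotationGenerator w j k) =
      (-2 * (Fintype.card ι - 1) : 𝕜) • 1 := by
  have := sum_smul_rotationGenerator_mul_mul_rotationGenerator hw 1
  simp only [mul_one, transpose_one, diagonal_mul_diagonal, Pi.inv_apply,
    inv_mul_cancel₀ (hw _), diagonal_one, trace_one] at this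
  rw [this]
  module

theorem sum_smul_rotationGenerator_sq_mul {m : Type*} (hw : ∀ i, w i ≠ 0) (B : Matrix ι m 𝕜) :
    ∑ j, ∑ k, (w j * w k)⁻¹ • (rotationGenerator w j k * rotationGenerator w j k * B) =
      (-2 * (Fintype.card ι - 1) : 𝕜) • B := by
  simpa only [Matrix.sum_mul, Matrix.smul_mul, Matrix.one_mul] using
    congr_arg (· * B) (sum_smul_rotationGenerator_sq hw)

theorem sum_smul_mul_rotationGenerator_sq {m : Type*} (hw : ∀ i, w i ≠ 0) (C : Matrix m ι 𝕜) :
    ∑ j, ∑ k, (w j * w k)⁻¹ • (C * (rotationGenerator w j k * rotationGenerator w j k)) =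
      (-2 * (Fintype.card ι - 1) : 𝕜) • C := by
  simpa only [Matrix.mul_sum, Matrix.mul_smul, Matrix.mul_one] using
    congr_arg (C * ·) (sum_smul_rotationGenerator_sq hw)

end Casimir

section BoostSubmodule

attribute [local instance 100] LieRing.ofAssociativeRing

variable {𝕜 ι : Type*} [Field 𝕜] [Fintype ι] [DecidableEq ι] {w : ι → 𝕜}

/-- The matrix `α E_{k⋆} + w_k β E_{⋆k}` mixing the `k`-th coordinate with the last coordinate `⋆`.
For `(α, β) = (-s, 1)` it generates the rotations in the `k`-`⋆` plane that preserve the quadratic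
form with weights `w` and `s`; the factor `w_k` makes the condition on `(α, β)` independent
of `k`. -/
def boost (w : ι → 𝕜) (k : ι) (α β : 𝕜) : Matrix (ι ⊕ Fin 1) (ι ⊕ Fin 1) 𝕜 :=
  fromBlocks 0 (single k 0 α) (single 0 k (w k * β)) 0

omit [Fintype ι] in
theorem boost_add (k : ι) (α β α' β' : 𝕜) :
    boost w k (α + α') (β + β') = boost w k α β + boost w k α' β' := by
  simp only [boost, fromBlocks_add, single_add, mul_add, add_zero]

omit [Fintype ι] in
theorem boost_smul (k : ι) (a α β : 𝕜) : boost w k (a * α) (a * β) = a • boost w k α β := by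
  simp only [boost, fromBlocks_smul, smul_single, smul_eq_mul, smul_zero, mul_left_comm]

omit [Fintype ι] in
theorem boost_zero (k : ι) : boost w k 0 0 = 0 := by
  simp only [boost, mul_zero, single_zero, fromBlocks_zero]

/-- The coefficients `(α, β)` of the boosts contained in `𝔣`. -/
def boostSubmodule (w : ι → 𝕜) (𝔣 : LieSubalgebra 𝕜 (Matrix (ι ⊕ Fin 1) (ι ⊕ Fin 1) 𝕜)) :
    Submodule 𝕜 (𝕜 × 𝕜) where
  carrier := {p | ∀ k, boost w k p.1 p.2 ∈ 𝔣}
  zero_mem' k := by simpa only [Prod.fst_zero, Prod.snd_zero, boost_zero] using 𝔣.zero_mem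
  add_mem' hp hq k := by
    simpa only [Prod.fst_add, Prod.snd_add, boost_add] using 𝔣.add_mem (hp k) (hq k)
  smul_mem' a p hp k := by
    simpa only [Prod.smul_fst, Prod.smul_snd, smul_eq_mul, boost_smul] using
      𝔣.smul_mem a (hp k)

variable {𝔣 : LieSubalgebra 𝕜 (Matrix (ι ⊕ Fin 1) (ι ⊕ Fin 1) 𝕜)}

theorem mem_boostSubmodule {p : 𝕜 × 𝕜} :
    p ∈ boostSubmodule w 𝔣 ↔ ∀ k, boost w k p.1 p.2 ∈ 𝔣 :=
  Iff.rfl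

theorem lie_lie_fromBlocks (K L P : Matrix ι ι 𝕜) (b : Matrix ι (Fin 1) 𝕜)
    (c : Matrix (Fin 1) ι 𝕜) (d : Matrix (Fin 1) (Fin 1) 𝕜) :
    ⁅fromBlocks K 0 0 (0 : Matrix (Fin 1) (Fin 1) 𝕜),
        ⁅fromBlocks L 0 0 (0 : Matrix (Fin 1) (Fin 1) 𝕜), fromBlocks P b c d⁆⁆ =
      fromBlocks ⁅K, ⁅L, P⁆⁆ (K * L * b) (c * (L * K)) 0 := by
  simp [Ring.lie_def, fromBlocks_multiply, sub_eq_add_neg, fromBlocks_neg, fromBlocks_add,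
    Matrix.mul_assoc]

omit [Fintype ι] [DecidableEq ι] in
theorem sum_fromBlocks {κ l m n o α : Type*} [AddCommMonoid α] (s : Finset κ)
    (A : κ → Matrix n l α) (B : κ → Matrix n m α) (C : κ → Matrix o l α) (D : κ → Matrix o m α) :
    ∑ i ∈ s, fromBlocks (A i) (B i) (C i) (D i) =
      fromBlocks (∑ i ∈ s, A i) (∑ i ∈ s, B i) (∑ i ∈ s, C i) (∑ i ∈ s, D i) := by
  ext (i | i) (j | j) <;> simp [Matrix.sum_apply]

theorem sum_smul_lie_lie_rotationGenerator (hw : ∀ i, w i ≠ 0) {P : Matrix ι ι 𝕜}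
    (hP : P.trace = 0) (b : Matrix ι (Fin 1) 𝕜) (c : Matrix (Fin 1) ι 𝕜) :
    ∑ j, ∑ k, (w j * w k)⁻¹ • ⁅fromBlocks (rotationGenerator w j k) 0 0
          (0 : Matrix (Fin 1) (Fin 1) 𝕜), ⁅fromBlocks (rotationGenerator w j k) 0 0
          (0 : Matrix (Fin 1) (Fin 1) 𝕜), fromBlocks P b c 0⁆⁆ =
      fromBlocks (-(4 : 𝕜) • ((Fintype.card ι - 1 : 𝕜) • P + diagonal w⁻¹ * Pᵀ * diagonal w))
        (-(2 : 𝕜) • (Fintype.card ι - 1 : 𝕜) • b) (-(2 : 𝕜) • (Fintype.card ι - 1 : 𝕜) • c) 0 := by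
  have lie_lie (j k : ι) : ⁅rotationGenerator w j k, ⁅rotationGenerator w j k, P⁆⁆ =
      rotationGenerator w j k * rotationGenerator w j k * P +
        P * (rotationGenerator w j k * rotationGenerator w j k) -
        (2 : 𝕜) • (rotationGenerator w j k * P * rotationGenerator w j k) := by
    simp only [Ring.lie_def, ofNat_smul_eq_nsmul]
    noncomm_ring
  simp only [lie_lie_fromBlocks, fromBlocks_smul, sum_fromBlocks, smul_zero, lie_lie, smul_add,
    smul_sub, Finset.sum_add_distrib, Finset.sum_sub_distrib,
    sum_smul_rotationGenerator_sq_mul hw, sum_smul_mul_rotationGenerator_sq hw,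
    Finset.sum_const_zero, smul_comm (_ : 𝕜)⁻¹ (2 : 𝕜), ← Finset.smul_sum,
    sum_smul_rotationGenerator_mul_mul_rotationGenerator hw, hP]
  congr 1 <;> module

-- The Casimir operator of `𝔰𝔬(w)` separates the off-diagonal blocks from the block `P`.
theorem fromBlocks_zero_mem [CharZero 𝕜] (hw : ∀ i, w i ≠ 0)
    (h𝔣 : ∀ K : Matrix ι ι 𝕜, (diagonal w).IsSkewAdjoint K → fromBlocks K 0 0 0 ∈ 𝔣)
    {P : Matrix ι ι 𝕜} (hP : P.trace = 0) {b : Matrix ι (Fin 1) 𝕜} {c : Matrix (Fin 1) ι 𝕜}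
    (hX : fromBlocks P b c 0 ∈ 𝔣) : fromBlocks 0 b c 0 ∈ 𝔣 := by
  have casimir_mem := 𝔣.toSubmodule.sum_mem fun j (_ : j ∈ Finset.univ) ↦
    𝔣.toSubmodule.sum_mem fun k (_ : k ∈ Finset.univ) ↦ 𝔣.smul_mem (w j * w k)⁻¹ <|
      𝔣.lie_mem (h𝔣 _ (isSkewAdjoint_diagonal_rotationGenerator w j k)) <|
      𝔣.lie_mem (h𝔣 _ (isSkewAdjoint_diagonal_rotationGenerator w j k)) hX
  rw [sum_smul_lie_lie_rotationGenerator hw hP] at casimir_mem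
  have skew : (diagonal w).IsSkewAdjoint (P - diagonal w⁻¹ * Pᵀ * diagonal w) := by
    refine isSkewAdjoint_diagonal_iff.2 fun i j ↦ ?_
    simp only [Matrix.sub_apply, mul_diagonal, diagonal_mul, transpose_apply, Pi.inv_apply]
    field_simp [hw]
    ring
  have card_ne : (2 * Fintype.card ι + 2 : 𝕜) ≠ 0 := by
    exact_mod_cast (by omega : 2 * Fintype.card ι + 2 ≠ 0)
  have : fromBlocks 0 b c 0 = (2 * Fintype.card ι + 2 : 𝕜)⁻¹ • (fromBlocks
        (-(4 : 𝕜) • ((Fintype.card ι - 1 : 𝕜) • P + diagonal w⁻¹ * Pᵀ * diagonal w))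
        (-(2 : 𝕜) • (Fintype.card ι - 1 : 𝕜) • b) (-(2 : 𝕜) • (Fintype.card ι - 1 : 𝕜) • c) 0 +
      (4 * Fintype.card ι : 𝕜) • fromBlocks P b c 0 -
      (4 : 𝕜) • fromBlocks (P - diagonal w⁻¹ * Pᵀ * diagonal w) 0 0 0) := by
    rw [eq_inv_smul_iff₀ card_ne]
    simp only [fromBlocks_smul, sub_eq_add_neg (fromBlocks _ _ _ _), fromBlocks_neg,
      fromBlocks_add]
    congr 1 <;> module
  rw [this]
  exact 𝔣.smul_mem _ (𝔣.sub_mem (𝔣.add_mem casimir_mem (𝔣.smul_mem _ hX))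
    (𝔣.smul_mem _ (h𝔣 _ skew)))

theorem rotationGenerator_mul_rotationGenerator {j k l : ι} (hkj : k ≠ j) (hlj : l ≠ j)
    (hkl : k ≠ l) :
    rotationGenerator w j k * rotationGenerator w j l = -single k l (w j * w l) := by
  simp [rotationGenerator, sub_mul, mul_sub, hkj, hlj.symm, hkl]

theorem boost_eq_smul_fromBlocks (hw : ∀ i, w i ≠ 0) (X : Matrix (ι ⊕ Fin 1) (ι ⊕ Fin 1) 𝕜)
    (j k l : ι) :
    boost w k (X (.inl l) (.inr 0)) (X (.inr 0) (.inl l) / w l) =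
      (-(w j * w l))⁻¹ • fromBlocks 0 (-single k l (w j * w l) * X.toBlocks₁₂)
        (X.toBlocks₂₁ * -single l k (w j * w k)) 0 := by
  have hj := hw j
  have hl := hw l
  have single_mul : single k l (w j * w l) * X.toBlocks₁₂ =
      single k 0 (w j * w l * X (.inl l) (.inr 0)) := by
    ext a b
    obtain rfl := Subsingleton.elim 0 b
    simp [single_apply, Matrix.mul_apply, toBlocks₁₂, ite_and]
  have mul_single : X.toBlocks₂₁ * single l k (w j * w k) =
      single 0 k (X (.inr 0) (.inl l) * (w j * w k)) := by
    ext b a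
    obtain rfl := Subsingleton.elim 0 b
    simp [single_apply, Matrix.mul_apply, toBlocks₂₁, ite_and]
  rw [Matrix.neg_mul, Matrix.mul_neg, single_mul, mul_single, boost, fromBlocks_smul,
    smul_neg, smul_neg, ← neg_smul, ← neg_smul, smul_single, smul_single, smul_zero, smul_zero]
  congr 2 <;> simp only [smul_eq_mul] <;> field_simp

theorem boost_mem_of_ne [CharZero 𝕜] (hι : 3 ≤ Fintype.card ι) (hw : ∀ i, w i ≠ 0)
    (h𝔣 : ∀ K : Matrix ι ι 𝕜, (diagonal w).IsSkewAdjoint K → fromBlocks K 0 0 0 ∈ 𝔣)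
    {X : Matrix (ι ⊕ Fin 1) (ι ⊕ Fin 1) 𝕜} (hX : X ∈ 𝔣) {k l : ι} (hkl : k ≠ l) :
    boost w k (X (.inl l) (.inr 0)) (X (.inr 0) (.inl l) / w l) ∈ 𝔣 := by
  obtain ⟨j, hjk, hjl⟩ := ENat.exists_ne_ne_of_three_le (by simpa using hι) k l
  have lie_lie_mem := 𝔣.lie_mem (h𝔣 _ (isSkewAdjoint_diagonal_rotationGenerator w j k)) <|
    𝔣.lie_mem (h𝔣 _ (isSkewAdjoint_diagonal_rotationGenerator w j l)) hX
  rw [← fromBlocks_toBlocks X, lie_lie_fromBlocks,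
    rotationGenerator_mul_rotationGenerator hjk.symm hjl.symm hkl,
    rotationGenerator_mul_rotationGenerator hjl.symm hjk.symm hkl.symm] at lie_lie_mem
  rw [boost_eq_smul_fromBlocks hw X j]
  exact 𝔣.smul_mem _ <| fromBlocks_zero_mem hw h𝔣 (by
    rw [Ring.lie_def, trace_sub, trace_mul_comm, sub_self]) lie_lie_mem

theorem mk_mem_boostSubmodule [CharZero 𝕜] (hι : 3 ≤ Fintype.card ι) (hw : ∀ i, w i ≠ 0)
    (h𝔣 : ∀ K : Matrix ι ι 𝕜, (diagonal w).IsSkewAdjoint K → fromBlocks K 0 0 0 ∈ 𝔣)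
    {X : Matrix (ι ⊕ Fin 1) (ι ⊕ Fin 1) 𝕜} (hX : X ∈ 𝔣) (l : ι) :
    (X (.inl l) (.inr 0), X (.inr 0) (.inl l) / w l) ∈ boostSubmodule w 𝔣 := by
  intro k
  obtain rfl | hkl := eq_or_ne k l
  · obtain ⟨j, hjk, -⟩ := ENat.exists_ne_ne_of_three_le (by simpa using hι) k k
    simpa [boost, hw] using
      boost_mem_of_ne hι hw h𝔣 (boost_mem_of_ne hι hw h𝔣 hX hjk) hjk.symm
  · exact boost_mem_of_ne hι hw h𝔣 hX hkl

end BoostSubmodule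

theorem exists_forall_fst_eq_neg_mul_snd {𝕜 : Type*} [Field 𝕜] {P : Submodule 𝕜 (𝕜 × 𝕜)}
    (hfst : ∃ p ∈ P, p.1 ≠ 0) (hsnd : ∃ p ∈ P, p.2 ≠ 0) (hP : P ≠ ⊤) :
    ∃ s ≠ 0, (-s, 1) ∈ P ∧ ∀ p ∈ P, p.1 = -s * p.2 := by
  obtain ⟨r, hr, hr₁, hr₂⟩ : ∃ r ∈ P, r.1 ≠ 0 ∧ r.2 ≠ 0 := by
    obtain ⟨p, hp, hp₁⟩ := hfst
    obtain ⟨q, hq, hq₂⟩ := hsnd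
    by_cases hp₂ : p.2 = 0
    · by_cases hq₁ : q.1 = 0
      · exact ⟨p + q, P.add_mem hp hq, by simpa [hq₁], by simpa [hp₂]⟩
      · exact ⟨q, hq, hq₁, hq₂⟩
    · exact ⟨p, hp, hp₁, hp₂⟩
  refine ⟨-r.1 / r.2, div_ne_zero (neg_ne_zero.2 hr₁) hr₂, ?_, fun p hp ↦ ?_⟩
  · convert P.smul_mem r.2⁻¹ hr using 1
    ext <;> simp [hr₂, div_eq_inv_mul]
  · by_contra hne
    have hδ : p.1 * r.2 - r.1 * p.2 ≠ 0 := by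
      contrapose hne
      field_simp
      linear_combination hne
    refine hP (Submodule.eq_top_iff'.2 fun v ↦ ?_)
    have smul_v : (p.1 * r.2 - r.1 * p.2) • v =
        (v.1 * r.2 - r.1 * v.2) • p + (p.1 * v.2 - v.1 * p.2) • r := by
      ext <;> simp only [Prod.fst_add, Prod.snd_add, Prod.smul_fst, Prod.smul_snd, smul_eq_mul] <;>
        ring
    rw [← P.smul_mem_iff hδ, smul_v]
    exact P.add_mem (P.smul_mem _ hp) (P.smul_mem _ hr)

section IrreducibleSubgroup

variable {𝕜 n : Type*} [Field 𝕜] [Fintype n] [DecidableEq n]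
  {F : Subgroup (SpecialLinearGroup n 𝕜)} {D : Set (Matrix n n 𝕜)}

theorem eq_zero_of_forall_mulVec_eq_zero
    (hirr : ∀ W : Submodule 𝕜 (n → 𝕜),
      (∀ g ∈ F, ∀ x ∈ W, (g : Matrix n n 𝕜) *ᵥ x ∈ W) → W = ⊥ ∨ W = ⊤)
    (hD : ∀ g ∈ F, ∀ d ∈ D, (g : Matrix n n 𝕜) * d * (g⁻¹ : SpecialLinearGroup n 𝕜) ∈ D)
    {x : n → 𝕜} (hx : x ≠ 0) (hDx : ∀ d ∈ D, d *ᵥ x = 0) {d : Matrix n n 𝕜} (hd : d ∈ D) :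
    d = 0 := by
  let W : Submodule 𝕜 (n → 𝕜) := ⨅ d ∈ D, LinearMap.ker d.mulVecLin
  have mem_W {y : n → 𝕜} : y ∈ W ↔ ∀ d ∈ D, d *ᵥ y = 0 := by
    simp only [W, Submodule.mem_iInf, LinearMap.mem_ker, mulVecLin_apply]
  have invariant (g) (hg : g ∈ F) (y) (hy : y ∈ W) : (g : Matrix n n 𝕜) *ᵥ y ∈ W := by
    refine mem_W.2 fun d hd ↦ ?_
    have conj_mulVec := mem_W.1 hy _ (hD g⁻¹ (F.inv_mem hg) d hd)
    rw [inv_inv, mul_assoc, ← mulVec_mulVec, ← mulVec_mulVec] at conj_mulVec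
    have := congr_arg ((g : Matrix n n 𝕜) *ᵥ ·) conj_mulVec
    simpa only [mulVec_mulVec, ← mul_assoc, coe_mul_coe_inv, one_mul, mulVec_zero] using this
  have W_eq_top : W = ⊤ := (hirr W invariant).resolve_left fun h ↦
    hx ((Submodule.mem_bot 𝕜).1 (h ▸ mem_W.2 hDx))
  exact ext_of_mulVec_single fun i ↦ by
    rw [mem_W.1 (W_eq_top ▸ Submodule.mem_top) d hd, zero_mulVec]

theorem eq_zero_of_forall_vecMul_eq_zero
    (hirr : ∀ W : Submodule 𝕜 (n → 𝕜),
      (∀ g ∈ F, ∀ x ∈ W, (g : Matrix n n 𝕜) *ᵥ x ∈ W) → W = ⊥ ∨ W = ⊤)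
    (hD : ∀ g ∈ F, ∀ d ∈ D, (g : Matrix n n 𝕜) * d * (g⁻¹ : SpecialLinearGroup n 𝕜) ∈ D)
    {x : n → 𝕜} (hx : x ≠ 0) (hDx : ∀ d ∈ D, x ᵥ* d = 0) {d : Matrix n n 𝕜} (hd : d ∈ D) :
    d = 0 := by
  let W : Submodule 𝕜 (n → 𝕜) := Submodule.span 𝕜 {y | ∃ d ∈ D, ∃ v, d *ᵥ v = y}
  have invariant (g) (hg : g ∈ F) (y) (hy : y ∈ W) : (g : Matrix n n 𝕜) *ᵥ y ∈ W := by
    suffices W ≤ W.comap (g : Matrix n n 𝕜).mulVecLin from this hy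
    refine Submodule.span_le.2 ?_
    rintro _ ⟨d, hd, v, rfl⟩
    refine Submodule.subset_span ⟨_, hD g hg d hd, (g : Matrix n n 𝕜) *ᵥ v, ?_⟩
    simp only [mulVec_mulVec, mul_assoc, coe_inv_mul_coe, mul_one, mulVecLin_apply]
  have W_ne_top : W ≠ ⊤ := by
    intro h
    refine hx (dotProduct_eq_zero _ fun y ↦ ?_)
    have hy : y ∈ W := h ▸ Submodule.mem_top
    induction hy using Submodule.span_induction with
    | mem y hy =>
      obtain ⟨d, hd, v, rfl⟩ := hy
      rw [dotProduct_mulVec, hDx d hd, zero_dotProduct]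
    | zero => exact dotProduct_zero x
    | add y z _ _ hy hz => rw [dotProduct_add, hy, hz, add_zero]
    | smul a y _ hy => rw [dotProduct_smul, hy, smul_zero]
  have W_eq_bot : W = ⊥ := (hirr W invariant).resolve_right W_ne_top
  refine ext_of_mulVec_single fun i ↦ ?_
  rw [zero_mulVec, ← Submodule.mem_bot 𝕜, ← W_eq_bot]
  exact Submodule.subset_span ⟨d, hd, _, rfl⟩

end IrreducibleSubgroup

section IrreducibleBoosts

attribute [local instance 100] LieRing.ofAssociativeRing

variable {𝕜 ι : Type*} [Field 𝕜] [Fintype ι] [DecidableEq ι] {w : ι → 𝕜}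
  {𝔣 : LieSubalgebra 𝕜 (Matrix (ι ⊕ Fin 1) (ι ⊕ Fin 1) 𝕜)}
  {F : Subgroup (SpecialLinearGroup (ι ⊕ Fin 1) 𝕜)}

theorem exists_lie_ne_zero (hι : 3 ≤ Fintype.card ι) (hw : ∀ i, w i ≠ 0)
    (h𝔣 : ∀ K : Matrix ι ι 𝕜, (diagonal w).IsSkewAdjoint K → fromBlocks K 0 0 0 ∈ 𝔣) :
    ∃ X ∈ 𝔣, ∃ Y ∈ 𝔣, ⁅X, Y⁆ ≠ 0 := by
  obtain ⟨j, k, l, hjk, hjl, hkl⟩ := Fintype.two_lt_card_iff.1 hι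
  refine ⟨_, h𝔣 _ (isSkewAdjoint_diagonal_rotationGenerator w j k),
    _, h𝔣 _ (isSkewAdjoint_diagonal_rotationGenerator w j l), fun h ↦ ?_⟩
  have := congr_fun₂ h (.inl k) (.inl l)
  simp [Ring.lie_def, fromBlocks_multiply,
    rotationGenerator_mul_rotationGenerator hjk.symm hjl.symm hkl,
    rotationGenerator_mul_rotationGenerator hjl.symm hjk.symm hkl.symm, hw, hkl.symm] at this

theorem conj_lie_mem {n : Type*} [Fintype n] [DecidableEq n] {𝔤 : LieSubalgebra 𝕜 (Matrix n n 𝕜)}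
    {g : SpecialLinearGroup n 𝕜}
    (hg : ∀ X ∈ 𝔤, (g : Matrix n n 𝕜) * X * (g⁻¹ : SpecialLinearGroup n 𝕜) ∈ 𝔤)
    {X Y : Matrix n n 𝕜} (hX : X ∈ 𝔤) (hY : Y ∈ 𝔤) :
    ∃ X' ∈ 𝔤, ∃ Y' ∈ 𝔤, ⁅X', Y'⁆ =
      (g : Matrix n n 𝕜) * ⁅X, Y⁆ * (g⁻¹ : SpecialLinearGroup n 𝕜) := by
  refine ⟨_, hg X hX, _, hg Y hY, ?_⟩
  have conj_mul_conj (A B : Matrix n n 𝕜) :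
      (g : Matrix n n 𝕜) * A * (g⁻¹ : SpecialLinearGroup n 𝕜) *
        (g * B * (g⁻¹ : SpecialLinearGroup n 𝕜)) =
      g * (A * B) * (g⁻¹ : SpecialLinearGroup n 𝕜) := by
    simp only [mul_assoc]
    rw [← mul_assoc ((g⁻¹ : SpecialLinearGroup n 𝕜) : Matrix n n 𝕜) g, coe_inv_mul_coe, one_mul]
  rw [Ring.lie_def, Ring.lie_def, conj_mul_conj, conj_mul_conj, mul_sub, sub_mul]

-- Otherwise every element of `𝔣` has `e_⋆` as an eigenvector, so all brackets kill `e_⋆`.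
theorem exists_mem_boostSubmodule_fst_ne_zero [CharZero 𝕜] (hι : 3 ≤ Fintype.card ι)
    (hw : ∀ i, w i ≠ 0)
    (h𝔣 : ∀ K : Matrix ι ι 𝕜, (diagonal w).IsSkewAdjoint K → fromBlocks K 0 0 0 ∈ 𝔣)
    (hconj : ∀ g ∈ F, ∀ X ∈ 𝔣, (g : Matrix (ι ⊕ Fin 1) (ι ⊕ Fin 1) 𝕜) * X *
      (g⁻¹ : SpecialLinearGroup (ι ⊕ Fin 1) 𝕜) ∈ 𝔣)
    (hirr : ∀ W : Submodule 𝕜 (ι ⊕ Fin 1 → 𝕜), (∀ g ∈ F, ∀ x ∈ W,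
      (g : Matrix (ι ⊕ Fin 1) (ι ⊕ Fin 1) 𝕜) *ᵥ x ∈ W) → W = ⊥ ∨ W = ⊤) :
    ∃ p ∈ boostSubmodule w 𝔣, p.1 ≠ 0 := by
  by_contra! h
  have mulVec_single (X) (hX : X ∈ 𝔣) : X *ᵥ Pi.single (.inr 0) 1 =
      X (.inr 0) (.inr 0) • Pi.single (.inr 0) 1 := by
    ext (i | i)
    · simpa using h _ (mk_mem_boostSubmodule hι hw h𝔣 hX i)
    · obtain rfl := Subsingleton.elim 0 i
      simp
  obtain ⟨X, hX, Y, hY, hXY⟩ := exists_lie_ne_zero hι hw h𝔣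
  refine hXY (eq_zero_of_forall_mulVec_eq_zero (D := {d | ∃ X ∈ 𝔣, ∃ Y ∈ 𝔣, ⁅X, Y⁆ = d}) hirr
    (fun g hg _ ⟨X, hX, Y, hY, hd⟩ ↦ hd ▸ conj_lie_mem (hconj g hg) hX hY)
    (x := Pi.single (.inr 0) 1) (by simp) ?_ ⟨X, hX, Y, hY, rfl⟩)
  rintro _ ⟨X, hX, Y, hY, rfl⟩
  rw [Ring.lie_def, sub_mulVec, ← mulVec_mulVec, ← mulVec_mulVec, mulVec_single X hX,
    mulVec_single Y hY, mulVec_smul, mulVec_smul, mulVec_single X hX, mulVec_single Y hY,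
    smul_comm, sub_self]

theorem exists_mem_boostSubmodule_snd_ne_zero [CharZero 𝕜] (hι : 3 ≤ Fintype.card ι)
    (hw : ∀ i, w i ≠ 0)
    (h𝔣 : ∀ K : Matrix ι ι 𝕜, (diagonal w).IsSkewAdjoint K → fromBlocks K 0 0 0 ∈ 𝔣)
    (hconj : ∀ g ∈ F, ∀ X ∈ 𝔣, (g : Matrix (ι ⊕ Fin 1) (ι ⊕ Fin 1) 𝕜) * X *
      (g⁻¹ : SpecialLinearGroup (ι ⊕ Fin 1) 𝕜) ∈ 𝔣)
    (hirr : ∀ W : Submodule 𝕜 (ι ⊕ Fin 1 → 𝕜), (∀ g ∈ F, ∀ x ∈ W,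
      (g : Matrix (ι ⊕ Fin 1) (ι ⊕ Fin 1) 𝕜) *ᵥ x ∈ W) → W = ⊥ ∨ W = ⊤) :
    ∃ p ∈ boostSubmodule w 𝔣, p.2 ≠ 0 := by
  by_contra! h
  have single_vecMul (X) (hX : X ∈ 𝔣) : Pi.single (.inr 0) 1 ᵥ* X =
      X (.inr 0) (.inr 0) • Pi.single (.inr 0) 1 := by
    ext (i | i)
    · simpa [hw] using h _ (mk_mem_boostSubmodule hι hw h𝔣 hX i)
    · obtain rfl := Subsingleton.elim 0 i
      simp
  obtain ⟨X, hX, Y, hY, hXY⟩ := exists_lie_ne_zero hι hw h𝔣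
  refine hXY (eq_zero_of_forall_vecMul_eq_zero (D := {d | ∃ X ∈ 𝔣, ∃ Y ∈ 𝔣, ⁅X, Y⁆ = d}) hirr
    (fun g hg _ ⟨X, hX, Y, hY, hd⟩ ↦ hd ▸ conj_lie_mem (hconj g hg) hX hY)
    (x := Pi.single (.inr 0) 1) (by simp) ?_ ⟨X, hX, Y, hY, rfl⟩)
  rintro _ ⟨X, hX, Y, hY, rfl⟩
  rw [Ring.lie_def, vecMul_sub, ← vecMul_vecMul, ← vecMul_vecMul, single_vecMul X hX,
    single_vecMul Y hY, smul_vecMul, smul_vecMul, single_vecMul X hX, single_vecMul Y hY,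
    smul_comm, sub_self]

end IrreducibleBoosts

section BlockSingle

variable {R l m n o : Type*} [Zero R] [DecidableEq l] [DecidableEq m] [DecidableEq n]
  [DecidableEq o]

theorem fromBlocks_single_inl_inr (i : n) (j : m) (a : R) :
    (fromBlocks 0 (single i j a) 0 0 : Matrix (n ⊕ o) (l ⊕ m) R) =
      single (.inl i) (.inr j) a := by
  ext (p | p) (q | q) <;> simp [single_apply]

theorem fromBlocks_single_inr_inl (i : o) (j : l) (a : R) :
    (fromBlocks 0 0 (single i j a) 0 : Matrix (n ⊕ o) (l ⊕ m) R) =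
      single (.inr i) (.inl j) a := by
  ext (p | p) (q | q) <;> simp [single_apply]

end BlockSingle

section SpecialLinear

open NormedSpace

attribute [local instance 100] LieRing.ofAssociativeRing
attribute [local instance] Matrix.linftyOpNormedRing Matrix.linftyOpNormedAlgebra

theorem single_mem_of_boostSubmodule_eq_top {𝕜 ι : Type*} [Field 𝕜] [Fintype ι] [DecidableEq ι]
    {w : ι → 𝕜} (hw : ∀ i, w i ≠ 0)
    {𝔣 : LieSubalgebra 𝕜 (Matrix (ι ⊕ Fin 1) (ι ⊕ Fin 1) 𝕜)} (h : boostSubmodule w 𝔣 = ⊤)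
    {p q : ι ⊕ Fin 1} (hpq : p ≠ q) : single p q 1 ∈ 𝔣 := by
  have boost_mem (k : ι) (α β : 𝕜) : boost w k α β ∈ 𝔣 :=
    mem_boostSubmodule.1 (h ▸ Submodule.mem_top : (α, β) ∈ boostSubmodule w 𝔣) k
  have single_inl_inr (k : ι) (i : Fin 1) : single (.inl k) (.inr i) 1 ∈ 𝔣 := by
    obtain rfl := Subsingleton.elim 0 i
    have := boost_mem k 1 0
    rwa [boost, mul_zero, single_zero, fromBlocks_single_inl_inr] at this
  have single_inr_inl (k : ι) (i : Fin 1) : single (.inr i) (.inl k) 1 ∈ 𝔣 := by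
    obtain rfl := Subsingleton.elim 0 i
    have := boost_mem k 0 (w k)⁻¹
    rwa [boost, mul_inv_cancel₀ (hw k), single_zero, fromBlocks_single_inr_inl] at this
  rcases p with k | i <;> rcases q with l | j
  · have := 𝔣.lie_mem (single_inl_inr k 0) (single_inr_inl l 0)
    simpa [Ring.lie_def, single_mul_single_of_ne _ _ _ _ hpq.symm] using this
  · exact single_inl_inr k j
  · exact single_inr_inl l i
  · exact absurd (congr_arg _ (Subsingleton.elim i j)) hpq

theorem exp_eq_one_add_of_mul_self_eq_zero {A : Type*} [Ring A] [Algebra ℚ A]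
    [TopologicalSpace A] [IsTopologicalRing A] [T2Space A] {x : A} (hx : x * x = 0) :
    exp x = 1 + x := by
  simp only [exp_eq_tsum ℚ]
  rw [tsum_eq_sum (s := Finset.range 2)]
  · simp [Finset.sum_range_succ]
  · intro n hn
    obtain ⟨m, rfl⟩ := Nat.exists_eq_add_of_le (not_lt.1 (Finset.mem_range.not.1 hn))
    rw [pow_add, sq, hx, zero_mul, smul_zero]

theorem exp_log_smul_single_sub_single {n : Type*} [Fintype n] [DecidableEq n] {i j : n}
    (hij : i ≠ j) {c : ℂ} (hc : c ≠ 0) :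
    exp (Complex.log c • (single i i 1 - single j j 1)) =
      (SpecialLinearGroup.diag2n hij c hc : Matrix n n ℂ) := by
  have log_smul : Complex.log c • (single i i 1 - single j j 1) =
      diagonal (Complex.log c • (Pi.single i 1 - Pi.single j 1) : n → ℂ) := by
    rw [diagonal_smul, ← diagonal_single, ← diagonal_single, diagonal_sub]
    rfl
  rw [log_smul, exp_diagonal, SpecialLinearGroup.diag2n_coe]
  congr 1 with k
  rw [Pi.coe_exp, ← Complex.exp_eq_exp_ℂ]
  split_ifs with hki hkj
  · subst hki
    simp [hij, Complex.exp_log hc]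
  · subst hkj
    simp [hij.symm, Complex.exp_neg, Complex.exp_log hc]
  · simp [hki, hkj]

theorem exp_smul_single_eq_transvection {n : Type*} [Fintype n] [DecidableEq n] {i j : n}
    (hij : i ≠ j) (a : ℂ) :
    exp (a • single i j 1) = (SpecialLinearGroup.transvection hij a : Matrix n n ℂ) := by
  have sq_eq_zero : single i j a * single i j a = 0 :=
    single_mul_single_of_ne _ _ _ _ hij.symm _
  rw [SpecialLinearGroup.transvection_coe, smul_single, smul_eq_mul, mul_one,
    exp_eq_one_add_of_mul_self_eq_zero sq_eq_zero]

theorem eq_top_of_forall_single_mem {n : Type*} [Fintype n] [DecidableEq n] [Nontrivial n]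
    {F : Subgroup (SpecialLinearGroup n ℂ)} {hF : IsClosed (F : Set (SpecialLinearGroup n ℂ))}
    (h : ∀ i j : n, i ≠ j → single i j 1 ∈ subgroupLieAlgebra F hF) : F = ⊤ := by
  refine (Subgroup.eq_top_iff' F).2 fun g ↦
    SpecialLinearGroup.diagonal_transvection_induction' (· ∈ F) g ?_ ?_ fun _ _ ↦ F.mul_mem
  · intro i j hij c hc
    have : single i i 1 - single j j 1 ∈ subgroupLieAlgebra F hF := by
      simpa [Ring.lie_def] using LieSubalgebra.lie_mem _ (h i j hij) (h j i hij.symm)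
    obtain ⟨g, hg, hexp⟩ := (mem_subgroupLieAlgebra_iff.1 this).1 (Complex.log c)
    exact (Subtype.ext (hexp.trans (exp_log_smul_single_sub_single hij hc)) :
      g = SpecialLinearGroup.diag2n hij c hc) ▸ hg
  · intro i j hij a
    obtain ⟨g, hg, hexp⟩ := (mem_subgroupLieAlgebra_iff.1 (h i j hij)).1 a
    exact (Subtype.ext (hexp.trans (exp_smul_single_eq_transvection hij a)) :
      g = SpecialLinearGroup.transvection hij a) ▸ hg

end SpecialLinear

section SkewAdjointLieAlgebra

attribute [local instance 100] LieRing.ofAssociativeRing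

variable {𝕜 ι : Type*} [Field 𝕜] [CharZero 𝕜] [Fintype ι] [DecidableEq ι] {w : ι → 𝕜} {s : 𝕜}
  {𝔣 : LieSubalgebra 𝕜 (Matrix (ι ⊕ Fin 1) (ι ⊕ Fin 1) 𝕜)}
  {X : Matrix (ι ⊕ Fin 1) (ι ⊕ Fin 1) 𝕜}

omit [CharZero 𝕜] in
theorem lie_boost_apply_inl_inr (X : Matrix (ι ⊕ Fin 1) (ι ⊕ Fin 1) 𝕜) (k l : ι) (α β : 𝕜) :
    ⁅X, boost w k α β⁆ (.inl l) (.inr 0) =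
      α * (X (.inl l) (.inl k) - if k = l then X (.inr 0) (.inr 0) else 0) := by
  simp [Ring.lie_def, boost, Matrix.mul_apply, single_apply, ite_and, mul_sub, mul_comm]

omit [CharZero 𝕜] in
theorem lie_boost_apply_inr_inl (X : Matrix (ι ⊕ Fin 1) (ι ⊕ Fin 1) 𝕜) (k l : ι) (α β : 𝕜) :
    ⁅X, boost w k α β⁆ (.inr 0) (.inl l) =
      w k * β * ((if k = l then X (.inr 0) (.inr 0) else 0) - X (.inl k) (.inl l)) := by
  simp [Ring.lie_def, boost, Matrix.mul_apply, single_apply, ite_and, mul_sub, mul_comm]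

theorem isSkewAdjoint_of_mem (hι : 3 ≤ Fintype.card ι) (hw : ∀ i, w i ≠ 0)
    (h𝔣 : ∀ K : Matrix ι ι 𝕜, (diagonal w).IsSkewAdjoint K → fromBlocks K 0 0 0 ∈ 𝔣)
    (hs : s ≠ 0) (hmem : (-s, 1) ∈ boostSubmodule w 𝔣)
    (hline : ∀ p ∈ boostSubmodule w 𝔣, p.1 = -s * p.2) (hX : X ∈ 𝔣) (htr : X.trace = 0) :
    (diagonal (Sum.elim w fun _ ↦ s)).IsSkewAdjoint X := by
  have off_diag {Y} (hY : Y ∈ 𝔣) (k : ι) : w k * Y (.inl k) (.inr 0) =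
      -(s * Y (.inr 0) (.inl k)) := by
    have hk := hw k
    have := hline _ (mk_mem_boostSubmodule hι hw h𝔣 hY k)
    field_simp at this
    linear_combination this
  have diag_block (k l : ι) : w l * X (.inl l) (.inl k) + w k * X (.inl k) (.inl l) =
      if k = l then 2 * w k * X (.inr 0) (.inr 0) else 0 := by
    have := off_diag (𝔣.lie_mem hX (mem_boostSubmodule.1 hmem k)) l
    rw [lie_boost_apply_inl_inr, lie_boost_apply_inr_inl] at this
    refine mul_left_cancel₀ hs ?_
    split_ifs at this ⊢ with hkl
    · subst hkl
      linear_combination -this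
    · linear_combination -this
  have inr_inr : X (.inr 0) (.inr 0) = 0 := by
    have inl_inl (k : ι) : X (.inl k) (.inl k) = X (.inr 0) (.inr 0) := by
      have := diag_block k k
      rw [if_pos rfl] at this
      exact mul_left_cancel₀ (mul_ne_zero two_ne_zero (hw k)) (by linear_combination this)
    have : (Fintype.card ι + 1 : 𝕜) * X (.inr 0) (.inr 0) = 0 := by
      simpa [trace, inl_inl, add_mul] using htr
    exact (mul_eq_zero.1 this).resolve_left (Nat.cast_add_one_ne_zero _)
  rw [isSkewAdjoint_diagonal_iff]
  rintro (k | i) (l | j)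
  · simpa [inr_inr] using diag_block l k
  · obtain rfl := Subsingleton.elim 0 j
    simp [off_diag hX]
  · obtain rfl := Subsingleton.elim 0 i
    simp [off_diag hX]
  · obtain rfl := Subsingleton.elim 0 i
    obtain rfl := Subsingleton.elim 0 j
    simp [inr_inr]

theorem mem_of_isSkewAdjoint (hw : ∀ i, w i ≠ 0)
    (h𝔣 : ∀ K : Matrix ι ι 𝕜, (diagonal w).IsSkewAdjoint K → fromBlocks K 0 0 0 ∈ 𝔣)
    (hs : s ≠ 0) (hmem : (-s, 1) ∈ boostSubmodule w 𝔣)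
    (hX : (diagonal (Sum.elim w fun _ ↦ s)).IsSkewAdjoint X) : X ∈ 𝔣 := by
  rw [isSkewAdjoint_diagonal_iff] at hX
  have inl_inr (k : ι) : X (.inl k) (.inr 0) = -s * (X (.inr 0) (.inl k) / w k) := by
    have hk := hw k
    have : w k * X (.inl k) (.inr 0) + s * X (.inr 0) (.inl k) = 0 := hX (.inl k) (.inr 0)
    field_simp
    linear_combination this
  have inr_inr : X (.inr 0) (.inr 0) = 0 := by
    simpa [← two_mul, hs] using hX (.inr 0) (.inr 0)
  have hP : (diagonal w).IsSkewAdjoint X.toBlocks₁₁ :=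
    isSkewAdjoint_diagonal_iff.2 fun k l ↦ hX (.inl k) (.inl l)
  have eq_add_sum : X = fromBlocks X.toBlocks₁₁ 0 0 0 +
      ∑ k, (X (.inr 0) (.inl k) / w k) • boost w k (-s) 1 := by
    ext (k | i) (l | j)
    · simp [boost, Matrix.sum_apply, toBlocks₁₁]
    · obtain rfl := Subsingleton.elim 0 j
      simp [boost, Matrix.sum_apply, single_apply, inl_inr, mul_comm]
    · obtain rfl := Subsingleton.elim 0 i
      simp [boost, Matrix.sum_apply, single_apply, hw]
    · obtain rfl := Subsingleton.elim 0 i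
      obtain rfl := Subsingleton.elim 0 j
      simp [boost, Matrix.sum_apply, inr_inr]
  rw [eq_add_sum]
  exact 𝔣.add_mem (h𝔣 _ hP) (𝔣.toSubmodule.sum_mem fun k _ ↦
    𝔣.smul_mem _ (mem_boostSubmodule.1 hmem k))

end SkewAdjointLieAlgebra

section Similitude

variable {𝕜 n : Type*} [Field 𝕜] [Fintype n] [DecidableEq n] {v : n → 𝕜}

theorem exists_eq_smul_diagonal (hn : 3 ≤ Fintype.card n) (hv : ∀ i, v i ≠ 0)
    {M : Matrix n n 𝕜} (hM : ∀ K, (diagonal v).IsSkewAdjoint K → Kᵀ * M + M * K = 0) :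
    ∃ c : 𝕜, M = c • diagonal v := by
  have apply_eq (p q a b : n) :
      (if q = a then v q * M p b else 0) - (if p = a then v p * M q b else 0) +
        ((if q = b then v q * M a p else 0) - if p = b then v p * M a q else 0) = 0 := by
    have := congr_fun₂ (hM _ (isSkewAdjoint_diagonal_rotationGenerator v p q)) a b
    simpa [rotationGenerator, sub_mul, mul_sub, Matrix.mul_apply, single_apply, ite_and, mul_comm]
      using this
  have off_diag {p r : n} (hpr : p ≠ r) : M p r = 0 := by
    obtain ⟨q, hqp, hqr⟩ := ENat.exists_ne_ne_of_three_le (by simpa using hn) p r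
    simpa [hqp.symm, hqr, hpr, hv] using apply_eq p q q r
  obtain ⟨p⟩ : Nonempty n := Fintype.card_pos_iff.1 (by omega)
  refine ⟨M p p / v p, ?_⟩
  ext q r
  by_cases hqr : q = r
  · subst hqr
    by_cases hpq : p = q
    · subst hpq
      simp [hv]
    · have apply_self : v q * M p p = v p * M q q := by
        simpa [hpq, Ne.symm hpq, ← sub_eq_add_neg, sub_eq_zero] using apply_eq p q q p
      rw [Matrix.smul_apply, diagonal_apply_eq, smul_eq_mul, div_mul_eq_mul_div, mul_comm (M p p),
        apply_self, mul_div_cancel_left₀ _ (hv p)]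
  · simp [off_diag hqr, hqr]

theorem exists_transpose_mul_diagonal_mul_eq_smul (hn : 3 ≤ Fintype.card n)
    (hv : ∀ i, v i ≠ 0) {g : SpecialLinearGroup n 𝕜}
    (hg : ∀ K, (diagonal v).IsSkewAdjoint K → (diagonal v).IsSkewAdjoint
      ((g : Matrix n n 𝕜) * K * (g⁻¹ : SpecialLinearGroup n 𝕜))) :
    ∃ c : 𝕜, (g : Matrix n n 𝕜)ᵀ * diagonal v * g = c • diagonal v := by
  refine exists_eq_smul_diagonal hn hv fun K hK ↦ ?_
  have hconj : (g * K * (g⁻¹ : SpecialLinearGroup n 𝕜) : Matrix n n 𝕜)ᵀ * diagonal v =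
    diagonal v * -(g * K * (g⁻¹ : SpecialLinearGroup n 𝕜)) := hg K hK
  have transpose_mul_transpose : (g : Matrix n n 𝕜)ᵀ *
      ((g⁻¹ : SpecialLinearGroup n 𝕜) : Matrix n n 𝕜)ᵀ = 1 := by
    rw [← transpose_mul, coe_inv_mul_coe, transpose_one]
  have := congr_arg ((g : Matrix n n 𝕜)ᵀ * · * (g : Matrix n n 𝕜)) hconj
  simp only [transpose_mul, mul_neg, neg_mul, mul_assoc, coe_inv_mul_coe, mul_one] at this
  rw [← mul_assoc (g : Matrix n n 𝕜)ᵀ, transpose_mul_transpose, one_mul] at this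
  simp only [mul_assoc, this, neg_add_cancel]

end Similitude

section ConnectedSimilitude

variable {n : Type*} [Fintype n] [DecidableEq n] {J : Matrix n n ℂ}

theorem pow_card_eq_one_of_transpose_mul_mul_eq_smul (hJ : J.det ≠ 0)
    {g : SpecialLinearGroup n ℂ} {c : ℂ} (hg : (g : Matrix n n ℂ)ᵀ * J * g = c • J) :
    c ^ Fintype.card n = 1 := by
  have := congr_arg det hg
  rw [det_mul, det_mul, det_transpose, g.det_coe, one_mul, mul_one, det_smul] at this
  exact mul_right_cancel₀ hJ (by rw [← this, one_mul])

theorem transpose_mul_mul_eq_of_isPreconnected (hJ : J.det ≠ 0)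
    {F : Subgroup (SpecialLinearGroup n ℂ)}
    (hF : IsPreconnected (F : Set (SpecialLinearGroup n ℂ)))
    (hsim : ∀ g ∈ F, ∃ c : ℂ, (g : Matrix n n ℂ)ᵀ * J * g = c • J)
    {g : SpecialLinearGroup n ℂ} (hg : g ∈ F) : (g : Matrix n n ℂ)ᵀ * J * g = J := by
  cases isEmpty_or_nonempty n
  · exact Subsingleton.elim _ _
  obtain ⟨i, j, hij⟩ : ∃ i j, J i j ≠ 0 := by
    by_contra! h
    exact hJ (by rw [show J = 0 from Matrix.ext h, det_zero])
  let c (g : SpecialLinearGroup n ℂ) : ℂ := ((g : Matrix n n ℂ)ᵀ * J * g) i j / J i j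
  have eq_smul {g} (hg : g ∈ F) : (g : Matrix n n ℂ)ᵀ * J * g = c g • J := by
    obtain ⟨a, ha⟩ := hsim g hg
    simp only [c, ha, Matrix.smul_apply, smul_eq_mul, mul_div_cancel_right₀ a hij]
  have mapsTo_roots :
      Set.MapsTo c F (Polynomial.nthRootsFinset (Fintype.card n) (1 : ℂ)) := fun g hg ↦
    (Polynomial.mem_nthRootsFinset Fintype.card_pos 1).2
      (pow_card_eq_one_of_transpose_mul_mul_eq_smul hJ (eq_smul hg))
  have continuous_c : Continuous c := by fun_prop
  have c_eq_one : c g = c 1 := hF.constant_of_mapsTo (Finset.finite_toSet _).isDiscrete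
    continuous_c.continuousOn mapsTo_roots hg F.one_mem
  rw [eq_smul hg, c_eq_one]
  simp [c, hij]

end ConnectedSimilitude

section Hyperbolic

open NormedSpace

attribute [local instance] Matrix.linftyOpNormedRing Matrix.linftyOpNormedAlgebra

variable {n : Type*} [Fintype n] [DecidableEq n]

theorem exp_mulVec_of_mulVec_eq_smul {A : Matrix n n ℂ} {v : n → ℂ} {c : ℂ}
    (h : A *ᵥ v = c • v) : exp A *ᵥ v = Complex.exp c • v := by
  have pow_mulVec (k : ℕ) : A ^ k *ᵥ v = c ^ k • v := by
    induction k with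
    | zero => simp only [pow_zero, one_mulVec, one_smul]
    | succ k ih => rw [pow_succ, ← mulVec_mulVec, h, mulVec_smul, ih, smul_smul, pow_succ']
  have hA := (exp_series_hasSum_exp' (𝕂 := ℂ) A).map (mulVecBilin ℂ ℂ |>.flip v)
    (by fun_prop : Continuous fun A : Matrix n n ℂ ↦ A *ᵥ v)
  have hc := (exp_series_hasSum_exp' (𝕂 := ℂ) c).smul_const v
  rw [← Complex.exp_eq_exp_ℂ] at hc
  refine hA.unique (hc.congr_fun fun k ↦ ?_)
  simp [pow_mulVec, smul_smul]

theorem exp_smul_mulVec_of_mulVec_mulVec_eq {K : Matrix n n ℂ} {x : n → ℂ} {ρ : ℂ} (hρ : ρ ≠ 0)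
    (hK : K *ᵥ K *ᵥ x = ρ ^ 2 • x) (t : ℂ) :
    exp (t • K) *ᵥ x =
      Complex.cosh (t * ρ) • x + (Complex.sinh (t * ρ) / ρ) • K *ᵥ x := by
  have eigenvector {σ : ℂ} (hσ : σ ^ 2 = ρ ^ 2) :
      exp (t • K) *ᵥ (σ • x + K *ᵥ x) = Complex.exp (t * σ) • (σ • x + K *ᵥ x) := by
    refine exp_mulVec_of_mulVec_eq_smul ?_
    rw [smul_mulVec, mulVec_add, mulVec_smul, hK, ← hσ]
    module
  have eq_sub : x = (2 * ρ)⁻¹ • ((ρ • x + K *ᵥ x) - (-ρ • x + K *ᵥ x)) := by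
    rw [add_sub_add_right_eq_sub, ← sub_smul, smul_smul, sub_neg_eq_add, ← two_mul,
      inv_mul_cancel₀ (mul_ne_zero two_ne_zero hρ), one_smul]
  conv_lhs => rw [eq_sub]
  rw [mulVec_smul, mulVec_sub, eigenvector rfl, eigenvector (neg_sq ρ), mul_neg, Complex.cosh,
    Complex.sinh]
  match_scalars <;> field_simp
  ring

theorem exists_cosh_eq_and_sinh_eq {a b : ℂ} (h : a ^ 2 - b ^ 2 = 1) :
    ∃ θ, Complex.cosh θ = a ∧ Complex.sinh θ = b := by
  have mul_eq_one : (a + b) * (a - b) = 1 := by linear_combination h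
  have exp_log : Complex.exp (Complex.log (a + b)) = a + b :=
    Complex.exp_log (left_ne_zero_of_mul_eq_one mul_eq_one)
  have exp_neg_log : Complex.exp (-Complex.log (a + b)) = a - b := by
    rw [Complex.exp_neg, exp_log, inv_eq_of_mul_eq_one_right mul_eq_one]
  refine ⟨Complex.log (a + b), ?_, ?_⟩
  · rw [Complex.cosh, exp_log, exp_neg_log]
    ring
  · rw [Complex.sinh, exp_log, exp_neg_log]
    ring

end Hyperbolic

section Transitivity

theorem isSkewAdjoint_vecMulVec_sub {n R : Type*} [Fintype n] [CommRing R] {J : Matrix n n R}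
    (hJ : J.IsSymm) (x y : n → R) :
    J.IsSkewAdjoint (vecMulVec x (J *ᵥ y) - vecMulVec y (J *ᵥ x)) := by
  have vecMul_eq (z : n → R) : z ᵥ* J = J *ᵥ z := by rw [← mulVec_transpose, hJ.eq]
  simp only [Matrix.IsSkewAdjoint, Matrix.IsAdjointPair, transpose_sub, transpose_vecMulVec,
    neg_sub, sub_mul, mul_sub, vecMulVec_mul, mul_vecMulVec, vecMul_eq]

variable {n : Type*} [Fintype n] [DecidableEq n] [Nonempty n]
  {F : Subgroup (SpecialLinearGroup n ℂ)}
  {hF : IsClosed (F : Set (SpecialLinearGroup n ℂ))} {J : Matrix n n ℂ} {s : ℂ} {x y : n → ℂ}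

theorem exists_mem_mulVec_eq_of_sq_ne (hJ : J.IsSymm)
    (hskew : ∀ K, J.IsSkewAdjoint K → K ∈ subgroupLieAlgebra F hF) (hs : s ≠ 0)
    (hx : x ⬝ᵥ J *ᵥ x = s) (hy : y ⬝ᵥ J *ᵥ y = s) (hxy : (x ⬝ᵥ J *ᵥ y) ^ 2 ≠ s ^ 2) :
    ∃ g ∈ F, (g : Matrix n n ℂ) *ᵥ x = y := by
  set B := x ⬝ᵥ J *ᵥ y
  have hB' : y ⬝ᵥ J *ᵥ x = B := by
    rw [dotProduct_mulVec, ← mulVec_transpose, hJ.eq, dotProduct_comm]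
  let K := vecMulVec x (J *ᵥ y) - vecMulVec y (J *ᵥ x)
  have K_mulVec (z : n → ℂ) : K *ᵥ z = (z ⬝ᵥ J *ᵥ y) • x - (z ⬝ᵥ J *ᵥ x) • y := by
    simp only [K, sub_mulVec, vecMulVec_mulVec, op_smul_eq_smul, dotProduct_comm z]
  have K_mulVec_x : K *ᵥ x = B • x - s • y := by rw [K_mulVec, hx]
  have K_mulVec_y : K *ᵥ y = s • x - B • y := by rw [K_mulVec, hy, hB']
  obtain ⟨ρ, hρ⟩ := IsAlgClosed.exists_pow_nat_eq (B ^ 2 - s ^ 2) two_pos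
  have ρ_ne_zero : ρ ≠ 0 := by
    rintro rfl
    exact hxy (sub_eq_zero.1 (by simpa using hρ.symm))
  have K_mulVec_K_mulVec : K *ᵥ K *ᵥ x = ρ ^ 2 • x := by
    rw [K_mulVec_x, mulVec_sub, mulVec_smul, mulVec_smul, K_mulVec_x, K_mulVec_y, hρ]
    module
  obtain ⟨θ, hcosh, hsinh⟩ := exists_cosh_eq_and_sinh_eq (a := B / s) (b := -(ρ / s)) (by
    field_simp
    linear_combination -hρ)
  obtain ⟨g, hgF, hg⟩ := (mem_subgroupLieAlgebra_iff.1
    (hskew K (isSkewAdjoint_vecMulVec_sub hJ x y))).1 (θ / ρ)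
  refine ⟨g, hgF, ?_⟩
  rw [hg, exp_smul_mulVec_of_mulVec_mulVec_eq ρ_ne_zero K_mulVec_K_mulVec,
    div_mul_cancel₀ _ ρ_ne_zero, hcosh, hsinh, K_mulVec_x]
  match_scalars <;> field_simp
  ring

omit [DecidableEq n] [Nonempty n] in
theorem exists_dotProduct_mulVec_eq_and_sq_ne {e : n → ℂ} (hJ : J.IsSymm) (hs : s ≠ 0)
    (hy : y ⬝ᵥ J *ᵥ y = s) (he : e ⬝ᵥ J *ᵥ e = s) (hey : e ⬝ᵥ J *ᵥ y = 0)
    (hxy : (x ⬝ᵥ J *ᵥ y) ^ 2 = s ^ 2) :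
    ∃ z, z ⬝ᵥ J *ᵥ z = s ∧ (x ⬝ᵥ J *ᵥ z) ^ 2 ≠ s ^ 2 ∧ (z ⬝ᵥ J *ᵥ y) ^ 2 ≠ s ^ 2 := by
  have hye : y ⬝ᵥ J *ᵥ e = 0 := by
    rw [dotProduct_mulVec, ← mulVec_transpose, hJ.eq, dotProduct_comm, hey]
  let z (ε : ℂ) : n → ℂ := (3 / 5 : ℂ) • y + (ε * (4 / 5)) • e
  obtain ⟨ε, hε, hxz⟩ : ∃ ε : ℂ, ε ^ 2 = 1 ∧ (x ⬝ᵥ J *ᵥ z ε) ^ 2 ≠ s ^ 2 := by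
    by_contra! h
    have h_pos := h 1 (one_pow 2)
    have h_neg := h (-1) neg_one_sq
    simp only [z, mulVec_add, mulVec_smul, dotProduct_add, dotProduct_smul, smul_eq_mul]
      at h_pos h_neg
    have mul_eq_zero : (x ⬝ᵥ J *ᵥ y) * (x ⬝ᵥ J *ᵥ e) = 0 := by
      linear_combination (25 / 48) * (h_pos - h_neg)
    have sq_eq : (x ⬝ᵥ J *ᵥ e) ^ 2 = s ^ 2 := by
      linear_combination (25 / 32) * (h_pos + h_neg) - (9 / 16) * hxy
    refine hs (eq_zero_of_pow_eq_zero (n := 4) ?_)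
    linear_combination (x ⬝ᵥ J *ᵥ y) * (x ⬝ᵥ J *ᵥ e) * mul_eq_zero -
      (x ⬝ᵥ J *ᵥ e) ^ 2 * hxy - s ^ 2 * sq_eq
  refine ⟨z ε, ?_, hxz, fun h ↦ hs (eq_zero_of_pow_eq_zero (n := 2) ?_)⟩
  · simp only [z, mulVec_add, mulVec_smul, dotProduct_add, dotProduct_smul, smul_eq_mul,
      add_dotProduct, smul_dotProduct, hy, he, hye, hey]
    linear_combination (16 / 25) * s * hε
  · simp only [z, add_dotProduct, smul_dotProduct, hy, hey, smul_eq_mul] at h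
    linear_combination (-25 / 16) * h

theorem exists_mem_mulVec_eq {e : n → ℂ} (hJ : J.IsSymm)
    (hskew : ∀ K, J.IsSkewAdjoint K → K ∈ subgroupLieAlgebra F hF) (hs : s ≠ 0)
    (hx : x ⬝ᵥ J *ᵥ x = s) (hy : y ⬝ᵥ J *ᵥ y = s) (he : e ⬝ᵥ J *ᵥ e = s)
    (hey : e ⬝ᵥ J *ᵥ y = 0) : ∃ g ∈ F, (g : Matrix n n ℂ) *ᵥ x = y := by
  by_cases hxy : (x ⬝ᵥ J *ᵥ y) ^ 2 = s ^ 2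
  · obtain ⟨z, hz, hxz, hzy⟩ := exists_dotProduct_mulVec_eq_and_sq_ne hJ hs hy he hey hxy
    obtain ⟨g, hg, rfl⟩ := exists_mem_mulVec_eq_of_sq_ne hJ hskew hs hx hz hxz
    obtain ⟨k, hk, rfl⟩ := exists_mem_mulVec_eq_of_sq_ne hJ hskew hs hz hy hzy
    refine ⟨k * g, F.mul_mem hk hg, ?_⟩
    rw [Matrix.SpecialLinearGroup.coe_mul, mulVec_mulVec]
  · exact exists_mem_mulVec_eq_of_sq_ne hJ hskew hs hx hy hxy

end Transitivity

section Stabilizer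

variable {𝕜 ι : Type*} [Field 𝕜] [Fintype ι] [DecidableEq ι] {w : ι → 𝕜} {s : 𝕜}

theorem exists_eq_fromBlocks_of_mulVec_single_inr {g : Matrix (ι ⊕ Fin 1) (ι ⊕ Fin 1) 𝕜}
    (hs : s ≠ 0)
    (hg : gᵀ * diagonal (Sum.elim w fun _ ↦ s) * g = diagonal (Sum.elim w fun _ ↦ s))
    (hfix : g *ᵥ Pi.single (.inr 0) 1 = Pi.single (.inr 0) 1) :
    ∃ A : Matrix ι ι 𝕜, Aᵀ * diagonal w * A = diagonal w ∧ g = fromBlocks A 0 0 1 := by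
  have apply_inr (i : ι ⊕ Fin 1) :
      g i (.inr 0) = Pi.single (M := fun _ ↦ 𝕜) (.inr 0) 1 i := by
    rw [← hfix, mulVec_single_one, col_apply]
  have inr_inl (k : ι) : g (.inr 0) (.inl k) = 0 := by
    have := congr_fun₂ hg (.inr 0) (.inl k)
    simpa [Matrix.mul_apply, mul_diagonal, apply_inr, hs] using this
  have eq_fromBlocks : g = fromBlocks g.toBlocks₁₁ 0 0 1 := by
    ext (k | i) (l | j)
    · rfl
    · obtain rfl := Subsingleton.elim 0 j
      simp [apply_inr]
    · obtain rfl := Subsingleton.elim 0 i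
      simp [inr_inl]
    · obtain rfl := Subsingleton.elim 0 i
      obtain rfl := Subsingleton.elim 0 j
      simp [apply_inr]
  refine ⟨g.toBlocks₁₁, ?_, eq_fromBlocks⟩
  rw [eq_fromBlocks, ← fromBlocks_diagonal, fromBlocks_transpose, fromBlocks_multiply,
    fromBlocks_multiply] at hg
  simpa using (fromBlocks_inj.1 hg).1

end Stabilizer

section OrthogonalSubgroup

open QuadraticMap

variable {ι : Type*} [Fintype ι] [DecidableEq ι] {w : ι → ℂ} {s : ℂ}
  {F : Subgroup (SpecialLinearGroup (ι ⊕ Fin 1) ℂ)}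
  {hF : IsClosed (F : Set (SpecialLinearGroup (ι ⊕ Fin 1) ℂ))}

theorem mem_of_forall_weightedSumSquares_mulVec_eq [Nonempty ι] (hw : ∀ i, w i ≠ 0) (hs : s ≠ 0)
    (hskew : ∀ K, (diagonal (Sum.elim w fun _ ↦ s)).IsSkewAdjoint K →
      K ∈ subgroupLieAlgebra F hF)
    (horth : ∀ g ∈ F, ∀ x, weightedSumSquares ℂ (Sum.elim w fun _ ↦ s)
      ((g : Matrix (ι ⊕ Fin 1) (ι ⊕ Fin 1) ℂ) *ᵥ x) =
        weightedSumSquares ℂ (Sum.elim w fun _ ↦ s) x)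
    (hH : ∀ A : Matrix ι ι ℂ, Aᵀ * diagonal w * A = diagonal w →
      ∀ g : SpecialLinearGroup (ι ⊕ Fin 1) ℂ,
        (g : Matrix (ι ⊕ Fin 1) (ι ⊕ Fin 1) ℂ) = fromBlocks A 0 0 1 → g ∈ F)
    {g : SpecialLinearGroup (ι ⊕ Fin 1) ℂ}
    (hg : ∀ x, weightedSumSquares ℂ (Sum.elim w fun _ ↦ s)
      ((g : Matrix (ι ⊕ Fin 1) (ι ⊕ Fin 1) ℂ) *ᵥ x) =
        weightedSumSquares ℂ (Sum.elim w fun _ ↦ s) x) : g ∈ F := by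
  let e : ι ⊕ Fin 1 → ℂ := Pi.single (.inr 0) 1
  obtain ⟨i⟩ := ‹Nonempty ι›
  obtain ⟨a, ha⟩ := IsAlgClosed.exists_pow_nat_eq (s / w i) two_pos
  have norm_single : a * (a * w i) = s := by
    rw [← mul_assoc, ← pow_two, ha, div_mul_cancel₀ _ (hw i)]
  have norm_mulVec_e : ((g : Matrix (ι ⊕ Fin 1) (ι ⊕ Fin 1) ℂ) *ᵥ e) ⬝ᵥ
      diagonal (Sum.elim w fun _ ↦ s) *ᵥ (g : Matrix (ι ⊕ Fin 1) (ι ⊕ Fin 1) ℂ) *ᵥ e = s := by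
    rw [← weightedSumSquares_eq_dotProduct_mulVec, hg]
    simp [e]
  obtain ⟨k, hk, hke⟩ := exists_mem_mulVec_eq (y := e) (e := Pi.single (.inl i) a)
    (isSymm_diagonal _) hskew hs norm_mulVec_e (by simp [e]) (by simpa using norm_single)
    (by simp [e])
  have orth_mul (x : ι ⊕ Fin 1 → ℂ) : weightedSumSquares ℂ (Sum.elim w fun _ ↦ s)
      (((k * g : SpecialLinearGroup (ι ⊕ Fin 1) ℂ) : Matrix (ι ⊕ Fin 1) (ι ⊕ Fin 1) ℂ) *ᵥ x) =
        weightedSumSquares ℂ (Sum.elim w fun _ ↦ s) x := by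
    rw [Matrix.SpecialLinearGroup.coe_mul, ← mulVec_mulVec, horth k hk, hg]
  obtain ⟨A, hA, hkg⟩ := exists_eq_fromBlocks_of_mulVec_single_inr hs
    (weightedSumSquares_mulVec_iff.1 orth_mul)
    (by rw [Matrix.SpecialLinearGroup.coe_mul, ← mulVec_mulVec, hke])
  exact (F.mul_mem_cancel_left hk).1 (hH A hA _ hkg)

end OrthogonalSubgroup

section OrthogonalGroup

open QuadraticMap

theorem weightedSumSquares_one_one_neg_one (v : Fin 3 → ℂ) :
    weightedSumSquares ℂ ![(1 : ℂ), 1, -1] v = q3 v := by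
  simp only [weightedSumSquares_apply, Fin.sum_univ_three, q3, cons_val_zero, cons_val_one,
    cons_val, smul_eq_mul]
  ring

theorem IsAlgebraicSubgroup.isClosed {F : Subgroup (Matrix.SpecialLinearGroup n4 ℂ)}
    (hF : IsAlgebraicSubgroup F) : IsClosed (F : Set (Matrix.SpecialLinearGroup n4 ℂ)) := by
  obtain ⟨P, hP⟩ := hF
  have coe_eq : (F : Set (Matrix.SpecialLinearGroup n4 ℂ)) =
      ⋂ p ∈ P, {g : Matrix.SpecialLinearGroup n4 ℂ |
        MvPolynomial.eval (fun ij ↦ (g : Matrix n4 n4 ℂ) ij.1 ij.2) p = 0} := by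
    ext g
    simpa using hP g
  rw [coe_eq]
  exact isClosed_biInter fun p _ ↦
    isClosed_eq ((MvPolynomial.continuous_eval p).comp (by fun_prop)) continuous_const

theorem IsConnectedSubgroup.isPreconnected {F : Subgroup (Matrix.SpecialLinearGroup n4 ℂ)}
    (hF : IsConnectedSubgroup F) :
    IsPreconnected (F : Set (Matrix.SpecialLinearGroup n4 ℂ)) :=
  Matrix.SpecialLinearGroup.isClosedEmbedding_val.isInducing.isPreconnected_image.1
    (IsConnected.isPreconnected hF)

theorem stmt_16_general {ι : Type*} [Fintype ι] [DecidableEq ι] (hι : 3 ≤ Fintype.card ι)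
    {w : ι → ℂ} (hw : ∀ i, w i ≠ 0) (F : Subgroup (Matrix.SpecialLinearGroup (ι ⊕ Fin 1) ℂ))
    (hclosed : IsClosed (F : Set (Matrix.SpecialLinearGroup (ι ⊕ Fin 1) ℂ)))
    (hconn : IsPreconnected (F : Set (Matrix.SpecialLinearGroup (ι ⊕ Fin 1) ℂ)))
    (hirr : ∀ W : Submodule ℂ (ι ⊕ Fin 1 → ℂ),
      (∀ g ∈ F, ∀ x ∈ W, (g : Matrix (ι ⊕ Fin 1) (ι ⊕ Fin 1) ℂ).mulVec x ∈ W) → W = ⊥ ∨ W = ⊤)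
    (hHF : ∀ g : Matrix.SpecialLinearGroup (ι ⊕ Fin 1) ℂ,
      (∃ A : Matrix ι ι ℂ, (∀ v, weightedSumSquares ℂ w (A *ᵥ v) = weightedSumSquares ℂ w v) ∧
        (g : Matrix (ι ⊕ Fin 1) (ι ⊕ Fin 1) ℂ) = Matrix.fromBlocks A 0 0 1) → g ∈ F)
    (hFne : F ≠ ⊤) :
    ∃ S : QuadraticForm ℂ (ι ⊕ Fin 1 → ℂ),
      (∀ x : ι ⊕ Fin 1 → ℂ, (∀ y, QuadraticMap.polar S x y = 0) → x = 0) ∧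
      ∀ g : Matrix.SpecialLinearGroup (ι ⊕ Fin 1) ℂ,
        g ∈ F ↔ ∀ x : ι ⊕ Fin 1 → ℂ,
          S ((g : Matrix (ι ⊕ Fin 1) (ι ⊕ Fin 1) ℂ).mulVec x) = S x := by
  have : Nonempty ι := Fintype.card_pos_iff.1 (by omega)
  have : Nontrivial (ι ⊕ Fin 1) :=
    ⟨.inl (Classical.arbitrary ι), .inr 0, Sum.inl_ne_inr⟩
  have hH (A : Matrix ι ι ℂ) (hA : Aᵀ * diagonal w * A = diagonal w)
      (g : SpecialLinearGroup (ι ⊕ Fin 1) ℂ) (hg : g.1 = fromBlocks A 0 0 1) : g ∈ F :=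
    hHF g ⟨A, weightedSumSquares_mulVec_iff.2 hA, hg⟩
  let 𝔣 := subgroupLieAlgebra F hclosed
  have h𝔣 (K : Matrix ι ι ℂ) (hK : (diagonal w).IsSkewAdjoint K) : fromBlocks K 0 0 0 ∈ 𝔣 :=
    fromBlocks_mem_subgroupLieAlgebra hclosed (det_diagonal_ne_zero hw) hH hK
  have hconj (g) (hg : g ∈ F) (X) (hX : X ∈ 𝔣) := conj_mem_subgroupLieAlgebra hg hX
  obtain ⟨s, hs, hmem, hline⟩ := exists_forall_fst_eq_neg_mul_snd
    (exists_mem_boostSubmodule_fst_ne_zero hι hw h𝔣 hconj hirr)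
    (exists_mem_boostSubmodule_snd_ne_zero hι hw h𝔣 hconj hirr)
    fun htop ↦ hFne (eq_top_of_forall_single_mem fun _ _ ↦
      single_mem_of_boostSubmodule_eq_top hw htop)
  have hv : ∀ i, (Sum.elim w fun _ : Fin 1 ↦ s) i ≠ 0 := Sum.forall.2 ⟨hw, fun _ ↦ hs⟩
  have hskew (K) (hK : (diagonal (Sum.elim w fun _ ↦ s)).IsSkewAdjoint K) : K ∈ 𝔣 :=
    mem_of_isSkewAdjoint hw h𝔣 hs hmem hK
  have hsim (g) (hg : g ∈ F) := exists_transpose_mul_diagonal_mul_eq_smul (g := g)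
    (by simpa using hι.trans (Nat.le_succ _)) hv fun K hK ↦
      isSkewAdjoint_of_mem hι hw h𝔣 hs hmem hline (hconj g hg K (hskew K hK))
        (hconj g hg K (hskew K hK)).2
  have horth (g) (hg : g ∈ F) := weightedSumSquares_mulVec_iff.2
    (transpose_mul_mul_eq_of_isPreconnected (det_diagonal_ne_zero hv) hconn hsim hg)
  exact ⟨weightedSumSquares ℂ (Sum.elim w fun _ ↦ s),
    fun x hx ↦ eq_zero_of_polar_weightedSumSquares_eq_zero hv hx, fun g ↦ ⟨horth g,
      mem_of_forall_weightedSumSquares_mulVec_eq hw hs hskew horth hH⟩⟩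

end OrthogonalGroup

/-- If `F` is a connected semisimple algebraic subgroup of `SL(4,ℂ)` acting irreducibly
on `ℂ⁴` with `H ⊊ F ⊊ SL(4,ℂ)`, where `H = SO(2,1,ℂ) × {1}`, then `F = SO(S,ℂ)` for some
nondegenerate quadratic form `S` on `ℂ⁴`. -/
theorem stmt_16 (F : Subgroup (Matrix.SpecialLinearGroup n4 ℂ))
    (halg : IsAlgebraicSubgroup F)
    (hconn : IsConnectedSubgroup F)
    (hss : IsSemisimpleSubgroup F)
    (hirr : ∀ W : Submodule ℂ (n4 → ℂ),
      (∀ g ∈ F, ∀ x ∈ W, (g : Matrix n4 n4 ℂ).mulVec x ∈ W) → W = ⊥ ∨ W = ⊤)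
    (hHF : ∀ g : Matrix.SpecialLinearGroup n4 ℂ,
      (∃ A : Matrix (Fin 3) (Fin 3) ℂ, A.det = 1 ∧ (∀ v, q3 (A.mulVec v) = q3 v) ∧
        (g : Matrix n4 n4 ℂ) = Matrix.fromBlocks A 0 0 1) → g ∈ F)
    (hHne : ∃ g ∈ F, ¬ ∃ A : Matrix (Fin 3) (Fin 3) ℂ, A.det = 1 ∧
        (∀ v, q3 (A.mulVec v) = q3 v) ∧
        (g : Matrix n4 n4 ℂ) = Matrix.fromBlocks A 0 0 1)
    (hFne : F ≠ ⊤) :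
    ∃ S : QuadraticForm ℂ (n4 → ℂ),
      (∀ x : n4 → ℂ, (∀ y, QuadraticMap.polar S x y = 0) → x = 0) ∧
      ∀ g : Matrix.SpecialLinearGroup n4 ℂ,
        g ∈ F ↔ ∀ x : n4 → ℂ, S ((g : Matrix n4 n4 ℂ).mulVec x) = S x := by
  refine stmt_16_general (w := ![1, 1, -1]) (by simp) (by simp [Fin.forall_fin_succ]) F
    halg.isClosed hconn.isPreconnected hirr (fun g ↦ ?_) hFne
  rintro ⟨A, hA, hg⟩
  refine hHF g ⟨A, ?_, by simpa only [weightedSumSquares_one_one_neg_one] using hA, hg⟩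
  simpa [hg] using g.det_coe
end
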